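/- arXiv:1006.0590 — 2 statements merged into one kernel-verified Lean document; each statement's English description precedes it below -/
import Mathlib

section
/- For every ξ > 0 there exists an integer n₀ = n₀(ξ) such that every regular tournament G on n ≥ n₀ vertices contains a set of at most (1/2 + ξ)n Hamilton cycles which together cover all the edges of G. -/
/-- The outdegree of a vertex `x` in the digraph with adjacency relation `G`. -/
noncomputable def outDeg {V : Type*} (G : V → V → Prop) (x : V) : ℕ :=
  Nat.card {y : V // G x y}

/-- The indegree of a vertex `x` in the digraph with adjacency relation `G`. -/
noncomputable def inDeg {V : Type*} (G : V → V → Prop) (x : V) : ℕ :=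
  Nat.card {y : V // G y x}

/-- A tournament: loopless, and between any two distinct vertices exactly one directed edge. -/
def IsTournament {V : Type*} (G : V → V → Prop) : Prop :=
  (∀ x, ¬ G x x) ∧ ∀ x y : V, x ≠ y → (G x y ↔ ¬ G y x)

/-- `f` is a Hamilton cycle of the digraph `G`: a cyclic ordering of all vertices
with each consecutive pair joined by an edge. -/
def IsHamCycle {V : Type*} [Fintype V] (G : V → V → Prop)
    (f : ZMod (Fintype.card V) → V) : Prop :=
  Function.Bijective f ∧ ∀ i, G (f i) (f (i + 1))

/-!
Colour the vertices at random with `k` colours, for a large prime `k`. With positive probability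
every vertex has about `n / (2 * k)` outneighbours and inneighbours of each colour. Hence, for each
`d ≠ 0` in `ZMod k`, the edges raising the colour by `d` are covered by some `b ≈ n / (2 * k)`
permutations of the vertices, most of which consist almost entirely of such edges. Along such a
permutation the colours are passed in cyclic order, so that deleting what it does at a short window
of consecutive multiples of `d` leaves a union of few paths. The vertices coloured from the window
are then free to connect these paths and to absorb the remaining vertices, which gives a Hamilton
cycle. Rotating the window from one permutation to the next, these `k * b ≈ n / 2` Hamilton cycles
cover all edges except for a digraph of maximum degree `O(b)`, and such a sparse digraph is covered
by `O(b) = O(n / k)` further Hamilton cycles.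
-/

section HamiltonCover

open Finset Function

variable {V : Type*} {G H : V → V → Prop}

/-! ### Degrees into a set of vertices -/

open Classical in
/-- The number of outneighbours of `v` in `S`. -/
noncomputable def outDegOn (G : V → V → Prop) (S : Finset V) (v : V) : ℕ := #{y ∈ S | G v y}

open Classical in
/-- The number of inneighbours of `v` in `S`. -/
noncomputable def inDegOn (G : V → V → Prop) (S : Finset V) (v : V) : ℕ := #{y ∈ S | G y v}

/-- Every vertex, inside `S` or not, has at least `a` outneighbours and at least `a` inneighbours
in `S`. -/
def HasMinSemidegree (G : V → V → Prop) (S : Finset V) (a : ℕ) : Prop :=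
  ∀ v, a ≤ outDegOn G S v ∧ a ≤ inDegOn G S v

/-- Every vertex, inside `S` or not, has at most `b` outneighbours and at most `b` inneighbours
in `S`. -/
def HasMaxSemidegree (G : V → V → Prop) (S : Finset V) (b : ℕ) : Prop :=
  ∀ v, outDegOn G S v ≤ b ∧ inDegOn G S v ≤ b

lemma outDegOn_le_sdiff_add_card [DecidableEq V] (G : V → V → Prop) (S X : Finset V) (v : V) :
    outDegOn G S v ≤ outDegOn G (S \ X) v + #X := by
  classical
  refine (card_le_card fun y hy ↦ ?_).trans (card_union_le {y ∈ S \ X | G v y} X)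
  rw [mem_filter] at hy
  rw [mem_union, mem_filter, mem_sdiff]
  tauto

lemma HasMinSemidegree.sdiff [DecidableEq V] {S : Finset V} {a : ℕ}
    (hS : HasMinSemidegree G S a) (X : Finset V) : HasMinSemidegree G (S \ X) (a - #X) := fun v ↦
  ⟨Nat.sub_le_iff_le_add.2 <| (hS v).1.trans <| outDegOn_le_sdiff_add_card G S X v,
    Nat.sub_le_iff_le_add.2 <| (hS v).2.trans <| outDegOn_le_sdiff_add_card (flip G) S X v⟩

namespace IsTournament

lemma asymm (hG : IsTournament G) {x y : V} (h : G x y) : ¬ G y x := by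
  rcases eq_or_ne x y with rfl | hne
  · exact hG.1 x
  · exact (hG.2 x y hne).1 h

lemma ne (hG : IsTournament G) {x y : V} (h : G x y) : x ≠ y := by
  rintro rfl
  exact hG.1 x h

lemma total (hG : IsTournament G) {x y : V} (h : x ≠ y) : G x y ∨ G y x := by
  rw [hG.2 x y h]
  exact (em (G y x)).symm

lemma outDegOn_add_inDegOn [DecidableEq V] (hG : IsTournament G) (S : Finset V) (v : V) :
    outDegOn G S v + inDegOn G S v = #(S.erase v) := by
  classical
  have hdisj : Disjoint {y ∈ S | G v y} {y ∈ S | G y v} :=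
    disjoint_filter.2 fun y _ ↦ hG.asymm
  rw [outDegOn, inDegOn, ← card_union_of_disjoint hdisj, ← filter_or]
  congr 1
  ext y
  rw [mem_filter, mem_erase, and_comm]
  exact and_congr_left fun _ ↦
    ⟨fun h ↦ h.elim (fun h ↦ (hG.ne h).symm) hG.ne, fun h ↦ hG.total h.symm⟩

lemma exists_two_mul_outDegOn_lt_card (hG : IsTournament G) {S : Finset V} (hS : S.Nonempty) :
    ∃ v ∈ S, 2 * outDegOn G S v < #S := by
  classical
  refine exists_le_of_sum_le (f := fun v ↦ 2 * outDegOn G S v + 1) hS (le_of_eq ?_)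
  have hflip : ∑ v ∈ S, outDegOn G S v = ∑ v ∈ S, inDegOn G S v :=
    sum_card_bipartiteAbove_eq_sum_card_bipartiteBelow G
  calc ∑ v ∈ S, (2 * outDegOn G S v + 1)
      = ∑ v ∈ S, outDegOn G S v + ∑ v ∈ S, inDegOn G S v + ∑ v ∈ S, 1 := by
        rw [← hflip, sum_add_distrib, ← mul_sum, two_mul]
    _ = ∑ v ∈ S, (#(S.erase v) + 1) := by
        simp only [← sum_add_distrib, hG.outDegOn_add_inDegOn]
    _ = ∑ _v ∈ S, #S := sum_congr rfl fun _ hv ↦ card_erase_add_one hv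

lemma card_le_of_hasMaxSemidegree (hG : IsTournament G) {S : Finset V} {b : ℕ}
    (hS : HasMaxSemidegree G S b) : #S ≤ 2 * b + 1 := by
  classical
  rcases S.eq_empty_or_nonempty with rfl | ⟨v, hv⟩
  · simp
  · have h := hG.outDegOn_add_inDegOn S v
    rw [card_erase_of_mem hv] at h
    have := hS v
    omega

lemma two_mul_le_card_of_hasMinSemidegree (hG : IsTournament G) {S : Finset V} {a : ℕ}
    (hS : HasMinSemidegree G S a) (v : V) : 2 * a ≤ #S := by
  classical
  have h := hG.outDegOn_add_inDegOn S v
  have := card_erase_le (s := S) (a := v)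
  have := hS v
  omega

/-! ### Short connections through a set of large minimum semidegree -/

/-- If there were no edge from `A \ U` to `B \ U`, these sets would share at most one vertex, so
that a vertex of `A \ U` with few outneighbours in `A \ U` would have too few in `Y`. -/
lemma exists_edge_between [DecidableEq V] (hG : IsTournament G) {Y U A B : Finset V} {α : ℕ}
    (hY : HasMinSemidegree G Y α) (hα : 2 * #Y + 3 * #(U ∩ Y) + 1 < 5 * α)
    (hA : A ⊆ Y) (hB : B ⊆ Y) (hαA : α ≤ #A) (hαB : α ≤ #B) :
    ∃ a ∈ A \ U, ∃ b ∈ B \ U, G a b := by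
  classical
  by_contra! hno
  have hsdiff : ∀ T ⊆ Y, #T ≤ #(T \ U) + #(U ∩ Y) := fun T hT ↦ by
    rw [← card_sdiff_add_card_inter T U, inter_comm T U]
    gcongr
  have hinter : #((A \ U) ∩ (B \ U)) ≤ 1 := by
    refine card_le_one.2 fun x hx y hy ↦ ?_
    by_contra hne
    rw [mem_inter] at hx hy
    rcases hG.total hne with h | h
    · exact hno x hx.1 y hy.2 h
    · exact hno y hy.1 x hx.2 h
  have hunion : A \ U ∪ B \ U ⊆ Y :=
    union_subset (sdiff_subset.trans hA) (sdiff_subset.trans hB)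
  have hA' := hsdiff A hA
  have hB' := hsdiff B hB
  have hUY : #(U ∩ Y) ≤ #Y := card_le_card inter_subset_right
  obtain ⟨a, ha, hsmall⟩ := hG.exists_two_mul_outDegOn_lt_card (S := A \ U) (card_pos.1 (by omega))
  have hout : outDegOn G Y a ≤ outDegOn G (A \ U) a + #(Y \ (A \ U ∪ B \ U)) := by
    refine (card_le_card fun y hy ↦ ?_).trans (card_union_le {y ∈ A \ U | G a y} _)
    rw [mem_filter] at hy
    have hyB : y ∉ B \ U := fun hyB ↦ hno a ha y hyB hy.2
    by_cases hyA : y ∈ A \ U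
    · exact mem_union_left _ (mem_filter.2 ⟨hyA, hy.2⟩)
    · exact mem_union_right _ (mem_sdiff.2 ⟨hy.1, by simp only [mem_union, hyA, hyB, or_self,
        not_false_eq_true]⟩)
  have := card_union_add_card_inter (A \ U) (B \ U)
  have := card_sdiff_add_card_eq_card hunion
  have := (hY a).1
  omega

lemma exists_link [DecidableEq V] (hG : IsTournament G) {Y U : Finset V} {α : ℕ}
    (hY : HasMinSemidegree G Y α) (hα : 2 * #Y + 3 * #(U ∩ Y) + 1 < 5 * α) (u v : V) :
    ∃ a ∈ Y \ U, ∃ b ∈ Y \ U, G u a ∧ G a b ∧ G b v := by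
  classical
  obtain ⟨a, ha, b, hb, hab⟩ := hG.exists_edge_between hY hα
    (filter_subset (G u) Y) (filter_subset (G · v) Y) (hY u).1 (hY v).2
  simp only [mem_sdiff, mem_filter] at ha hb ⊢
  exact ⟨a, ⟨ha.1.1, ha.2⟩, b, ⟨hb.1.1, hb.2⟩, ha.1.2, hab, hb.1.2⟩

lemma exists_detour [DecidableEq V] (hG : IsTournament G) {Y U : Finset V} {α : ℕ}
    (hY : HasMinSemidegree G Y α) (hα : 2 * #Y + 3 * #(U ∩ Y) + 1 < 5 * α) (z : V) :
    ∃ a ∈ Y \ U, ∃ b ∈ Y \ U, G a z ∧ G z b ∧ G a b := by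
  classical
  obtain ⟨a, ha, b, hb, hab⟩ := hG.exists_edge_between hY hα
    (filter_subset (G · z) Y) (filter_subset (G z) Y) (hY z).2 (hY z).1
  simp only [mem_sdiff, mem_filter] at ha hb ⊢
  exact ⟨a, ⟨ha.1.1, ha.2⟩, b, ⟨hb.1.1, hb.2⟩, ha.1.2, hb.1.2, hab⟩

end IsTournament

/-! ### Paths with removable vertices -/

open Classical in
lemma isChain_orderedInsert (hG : ∀ x y, x ≠ y → G x y ∨ G y x) {v : V} {l : List V}
    (hl : l.IsChain G) (hv : v ∉ l) : (l.orderedInsert G v).IsChain G := by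
  induction l with
  | nil => exact List.isChain_singleton v
  | cons b l ih =>
    rw [List.orderedInsert_cons]
    split_ifs with hvb
    · exact List.isChain_cons_cons.2 ⟨hvb, hl⟩
    have hbv : G b v := (hG v b (by rintro rfl; simp at hv)).resolve_left hvb
    have htail := ih hl.tail (List.not_mem_of_not_mem_cons hv)
    cases l with
    | nil => simpa using hbv
    | cons c l =>
      rw [List.orderedInsert_cons] at htail ⊢
      split_ifs with hvc
      · exact List.isChain_cons_cons.2 ⟨hbv, by simpa only [if_pos hvc] using htail⟩
      · exact List.isChain_cons_cons.2
          ⟨(List.isChain_cons_cons.1 hl).1, by simpa only [if_neg hvc] using htail⟩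

/-- Rédei's theorem. -/
lemma exists_isChain_of_total [DecidableEq V] (hG : ∀ x y, x ≠ y → G x y ∨ G y x) (S : Finset V) :
    ∃ l : List V, l.Nodup ∧ l.toFinset = S ∧ l.IsChain G := by
  classical
  have hchain : ∀ l : List V, l.Nodup → (l.insertionSort G).IsChain G := fun l hl ↦ by
    induction l with
    | nil => exact List.isChain_nil
    | cons v l ih =>
      rw [List.nodup_cons] at hl
      exact isChain_orderedInsert hG (ih hl.2) (mt (List.mem_insertionSort G).1 hl.1)
  have hperm := List.perm_insertionSort G S.toList
  exact ⟨S.toList.insertionSort G, hperm.nodup_iff.2 S.nodup_toList,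
    by rw [List.toFinset_eq_of_perm _ _ hperm, toList_toFinset], hchain _ S.nodup_toList⟩

/-- A path of `G` with both ends outside `Z` which remains a path of `G` whenever some vertices of
`Z` are deleted from it; the deleted vertices are then free to be used elsewhere. -/
structure FlexPath [DecidableEq V] (G : V → V → Prop) (Z : Finset V) (P : List V) : Prop where
  nodup : P.Nodup
  isChain_filter : ∀ U ⊆ Z, (P.filter (· ∉ U)).IsChain G
  head : ∃ h ∈ P.head?, h ∉ Z
  getLast : ∃ h ∈ P.getLast?, h ∉ Z

lemma mem_head?_filter {p : V → Bool} {l : List V} {a : V} (hl : a ∈ l.head?) (ha : p a) :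
    a ∈ (l.filter p).head? := by
  obtain ⟨t, rfl⟩ := List.head?_eq_some_iff.1 hl
  rw [List.filter_cons_of_pos ha, List.head?_cons, Option.mem_some]

lemma mem_getLast?_filter {p : V → Bool} {l : List V} {a : V} (hl : a ∈ l.getLast?) (ha : p a) :
    a ∈ (l.filter p).getLast? := by
  obtain ⟨t, rfl⟩ := List.getLast?_eq_some_iff.1 hl
  simp [ha]

namespace FlexPath

variable [DecidableEq V] {Z : Finset V} {P Q : List V}

lemma of_isChain (hP : P.IsChain G) (hnodup : P.Nodup) (hne : P ≠ []) (hZ : ∀ x ∈ P, x ∉ Z) :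
    FlexPath G Z P where
  nodup := hnodup
  isChain_filter U hU := by
    have hPU : P.filter (· ∉ U) = P := List.filter_eq_self.2 fun x hx ↦
      decide_eq_true fun hxU ↦ hZ x hx (hU hxU)
    rwa [hPU]
  head := ⟨P.head hne, List.head_mem_head? hne, hZ _ (List.head_mem hne)⟩
  getLast := ⟨P.getLast hne, List.getLast_mem_getLast? hne, hZ _ (List.getLast_mem hne)⟩

lemma append (hP : FlexPath G Z P) (hQ : FlexPath G Z Q) (hPQ : P.Disjoint Q)
    (hedge : ∀ x ∈ P.getLast?, ∀ y ∈ Q.head?, G x y) : FlexPath G Z (P ++ Q) where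
  nodup := List.nodup_append'.2 ⟨hP.nodup, hQ.nodup, hPQ⟩
  isChain_filter U hU := by
    obtain ⟨x, hx, hxZ⟩ := hP.getLast
    obtain ⟨y, hy, hyZ⟩ := hQ.head
    have hx' := mem_getLast?_filter (p := (· ∉ U)) hx (decide_eq_true fun h ↦ hxZ (hU h))
    have hy' := mem_head?_filter (p := (· ∉ U)) hy (decide_eq_true fun h ↦ hyZ (hU h))
    rw [List.filter_append, List.isChain_append, hx', hy', ← Option.mem_def.1 hx,
      ← Option.mem_def.1 hy]
    exact ⟨hP.isChain_filter U hU, hQ.isChain_filter U hU, hedge⟩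
  head := hP.head.imp fun x hx ↦ ⟨by rw [List.head?_append, hx.1]; rfl, hx.2⟩
  getLast := hQ.getLast.imp fun x hx ↦ ⟨by rw [List.getLast?_append, hx.1]; rfl, hx.2⟩

lemma filter (hP : FlexPath G Z P) {U : Finset V} (hU : U ⊆ Z) :
    FlexPath G (Z \ U) (P.filter (· ∉ U)) where
  nodup := hP.nodup.filter _
  isChain_filter W hW := by
    simpa only [List.filter_filter, notMem_union, Bool.decide_and] using
      hP.isChain_filter (W ∪ U) (union_subset (hW.trans sdiff_subset) hU)
  head := hP.head.imp fun x hx ↦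
    ⟨mem_head?_filter hx.1 (decide_eq_true fun h ↦ hx.2 (hU h)), fun h ↦ hx.2 (mem_sdiff.1 h).1⟩
  getLast := hP.getLast.imp fun x hx ↦
    ⟨mem_getLast?_filter hx.1 (decide_eq_true fun h ↦ hx.2 (hU h)), fun h ↦ hx.2 (mem_sdiff.1 h).1⟩

lemma detour (hG : IsTournament G) {a z b : V} (ha : a ∉ Z) (hb : b ∉ Z) (haz : G a z)
    (hzb : G z b) (hab : G a b) : FlexPath G Z [a, z, b] where
  nodup := by simp [hG.ne haz, hG.ne hzb, hG.ne hab]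
  isChain_filter U hU := by
    have haU : a ∉ U := fun h ↦ ha (hU h)
    have hbU : b ∉ U := fun h ↦ hb (hU h)
    by_cases hz : z ∈ U <;> simp [haU, hbU, hz, haz, hzb, hab]
  head := ⟨a, rfl, ha⟩
  getLast := ⟨b, rfl, hb⟩

lemma isChain (hP : FlexPath G Z P) : P.IsChain G := by
  simpa using hP.isChain_filter ∅ (empty_subset Z)

end FlexPath

/-! ### Absorbing paths and vertices -/

lemma card_toFinset_inter_le_countP [DecidableEq V] (Q : List V) (Y : Finset V) :
    #(Q.toFinset ∩ Y) ≤ Q.countP (· ∈ Y) := by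
  calc #(Q.toFinset ∩ Y) = #(Q.filter (· ∈ Y)).toFinset := by
        rw [List.toFinset_filter, ← filter_mem_eq_inter]
        simp only [decide_eq_true_eq]
    _ ≤ Q.countP (· ∈ Y) := List.countP_eq_length_filter ▸ List.toFinset_card_le _

section Extension

variable [DecidableEq V] {Y Z : Finset V} {α : ℕ}

lemma FlexPath.exists_join (hG : IsTournament G) (hY : HasMinSemidegree G Y α)
    (hYZ : Disjoint Y Z) {P Q : List V} (hQ : FlexPath G Z Q) (hP : FlexPath G Z P)
    (hQP : Q.Disjoint P)
    (hα : 2 * #Y + 3 * (Q.countP (· ∈ Y) + P.countP (· ∈ Y)) + 1 < 5 * α) :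
    ∃ a ∈ Y, ∃ b ∈ Y, FlexPath G Z (Q ++ ([a, b] ++ P)) := by
  obtain ⟨u, hu, -⟩ := hQ.getLast
  obtain ⟨v, hv, -⟩ := hP.head
  have hused := card_toFinset_inter_le_countP (Q ++ P) Y
  rw [List.countP_append] at hused
  obtain ⟨a, ha, b, hb, hua, hab, hbv⟩ := hG.exists_link hY (U := (Q ++ P).toFinset)
    (by omega) u v
  simp only [mem_sdiff, List.mem_toFinset, List.mem_append, not_or] at ha hb
  have hlink : FlexPath G Z [a, b] :=
    .of_isChain (by simpa using hab) (by simpa using hG.ne hab) (by simp) (by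
      simpa using ⟨disjoint_left.1 hYZ ha.1, disjoint_left.1 hYZ hb.1⟩)
  have hlinkP : FlexPath G Z ([a, b] ++ P) :=
    hlink.append hP (by simp [ha.2, hb.2]) (by rw [Option.mem_def.1 hv]; simpa using hbv)
  exact ⟨a, ha.1, b, hb.1, hQ.append hlinkP (by simp [ha.2, hb.2, hQP])
    (by rw [Option.mem_def.1 hu]; simpa using hua)⟩

lemma exists_flexPath_of_blocks (hG : IsTournament G) (hY : HasMinSemidegree G Y α)
    (hYne : Y.Nonempty) (hYZ : Disjoint Y Z) (L : List (List V))
    (hL : ∀ p ∈ L, p.IsChain G ∧ p ≠ []) (hnodup : L.flatten.Nodup)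
    (hLYZ : ∀ x ∈ L.flatten, x ∉ Y ∧ x ∉ Z) (hα : 2 * #Y + 6 * L.length + 1 < 5 * α) :
    ∃ Q, FlexPath G Z Q ∧ (∀ p ∈ L, p <:+: Q) ∧ (∀ x ∈ Q, x ∈ Y ∨ x ∈ L.flatten) ∧
      Q.countP (· ∈ Y) ≤ 2 * L.length + 1 := by
  induction L with
  | nil =>
    obtain ⟨y, hy⟩ := hYne
    exact ⟨[y], .of_isChain (List.isChain_singleton y) (List.nodup_singleton y) (by simp)
      (by simpa using disjoint_left.1 hYZ hy), by simp [hy]⟩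
  | cons p L ih =>
    rw [List.flatten_cons, List.nodup_append'] at hnodup
    simp only [List.flatten_cons, List.mem_append, or_imp, forall_and, List.forall_mem_cons,
      List.length_cons] at hL hLYZ hα ⊢
    obtain ⟨Q, hQ, hLQ, hQY, hcount⟩ := ih (forall₂_and.2 ⟨hL.1.2, hL.2.2⟩) hnodup.2.1
      (forall₂_and.2 ⟨hLYZ.1.2, hLYZ.2.2⟩) (by omega)
    have hp : FlexPath G Z p := .of_isChain hL.1.1 hnodup.1 hL.2.1 hLYZ.2.1
    have hpY : p.countP (· ∈ Y) = 0 :=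
      List.countP_eq_zero.2 fun x hx ↦ by simpa using hLYZ.1.1 x hx
    have hQp : Q.Disjoint p := fun x hxQ hxp ↦
      (hQY x hxQ).elim (hLYZ.1.1 x hxp) (hnodup.2.2 hxp)
    obtain ⟨a, ha, b, hb, hQ'⟩ := hQ.exists_join hG hY hYZ hp hQp (by omega)
    refine ⟨_, hQ', ⟨?_, ?_⟩, ?_, ?_⟩
    · exact (List.suffix_append_of_suffix (List.suffix_append _ _)).isInfix
    · exact fun q hq ↦ (hLQ q hq).trans (List.prefix_append _ _).isInfix
    · intro x hx
      simp only [List.mem_append, List.mem_cons, List.not_mem_nil, or_false] at hx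
      rcases hx with hx | (rfl | rfl) | hx
      · exact (hQY x hx).imp_right .inr
      · exact .inl ha
      · exact .inl hb
      · exact .inr (.inl hx)
    · simp only [List.countP_append, List.countP_cons, List.countP_nil, hpY, ha, hb, decide_true,
        if_true]
      omega

lemma FlexPath.exists_absorb (hG : IsTournament G) (hY : HasMinSemidegree G Y α)
    (hYZ : Disjoint Y Z) {Q : List V} (hQ : FlexPath G Z Q) (W : Finset V) (hWZ : W ⊆ Z)
    (hα : 2 * #Y + 3 * (Q.countP (· ∈ Y) + 4 * #W) + 1 < 5 * α) :
    ∃ Q', FlexPath G Z Q' ∧ Q <:+: Q' ∧ (∀ z ∈ W, z ∈ Q') ∧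
      Q'.countP (· ∈ Y) ≤ Q.countP (· ∈ Y) + 4 * #W := by
  induction W using Finset.induction_on with
  | empty => exact ⟨Q, hQ, List.infix_rfl, by simp, by simp⟩
  | insert z W hzW ih =>
    rw [card_insert_of_notMem hzW] at hα ⊢
    rw [insert_subset_iff] at hWZ
    obtain ⟨Q', hQ', hQQ', hWQ', hcount⟩ := ih hWZ.2 (by omega)
    by_cases hzQ' : z ∈ Q'
    · exact ⟨Q', hQ', hQQ', by simpa using ⟨hzQ', hWQ'⟩, by omega⟩
    have hused := card_toFinset_inter_le_countP Q' Y
    obtain ⟨a, ha, b, hb, haz, hzb, hab⟩ := hG.exists_detour hY (U := Q'.toFinset) (by omega) z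
    simp only [mem_sdiff, List.mem_toFinset] at ha hb
    have hdetour : FlexPath G Z [a, z, b] :=
      .detour hG (disjoint_left.1 hYZ ha.1) (disjoint_left.1 hYZ hb.1) haz hzb hab
    have hdisj : Q'.Disjoint [a, z, b] := by simp [ha.2, hzQ', hb.2]
    have hcount' : [a, z, b].countP (· ∈ Y) = 2 := by
      simp [ha.1, hb.1, disjoint_right.1 hYZ hWZ.1]
    obtain ⟨c, hc, d, hd, hQ''⟩ := hQ'.exists_join hG hY hYZ hdetour hdisj (by omega)
    refine ⟨_, hQ'', hQQ'.trans (List.prefix_append _ _).isInfix, ?_, ?_⟩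
    · simp only [mem_insert, forall_eq_or_imp]
      exact ⟨by simp, fun w hw ↦ List.mem_append_left _ (hWQ' w hw)⟩
    · rw [List.countP_append, List.countP_append, hcount']
      simp only [List.countP_cons, List.countP_nil, hc, hd, decide_true, if_true]
      omega

end Extension

/-! ### Closing a path to a Hamilton cycle -/

/-- The cyclic sequence `f` passes directly from `x` to `y`. -/
def Traverses {n : ℕ} (f : ZMod n → V) (x y : V) : Prop := ∃ i, f i = x ∧ f (i + 1) = y

lemma exists_bijective_of_list [Fintype V] {C : List V} (hnodup : C.Nodup) (hmem : ∀ v, v ∈ C)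
    (hne : C ≠ []) : ∃ f : ZMod (Fintype.card V) → V, Bijective f ∧
      C.length = Fintype.card V ∧ ∀ (k : ℕ) (hk : k < C.length), f k = C[k] := by
  classical
  have hlen : C.length = Fintype.card V := by
    rw [← List.toFinset_card_of_nodup hnodup, ← card_univ]
    exact congrArg card (eq_univ_iff_forall.2 fun v ↦ List.mem_toFinset.2 (hmem v))
  have : NeZero (Fintype.card V) := ⟨hlen ▸ (List.length_pos_iff.2 hne).ne'⟩
  have hlt : ∀ i : ZMod (Fintype.card V), i.val < C.length := fun i ↦ i.val_lt.trans_eq hlen.symm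
  refine ⟨fun i ↦ C[i.val]'(hlt i), ?_, hlen, fun k hk ↦ ?_⟩
  · refine (Fintype.bijective_iff_injective_and_card _).2 ⟨fun i j hij ↦ ?_, ZMod.card _⟩
    exact ZMod.val_injective _ (hnodup.getElem_inj_iff.1 hij)
  · simp only [ZMod.val_cast_of_lt (hlen ▸ hk)]

lemma exists_isHamCycle_of_list [Fintype V] {C : List V} (hnodup : C.Nodup)
    (hmem : ∀ v, v ∈ C) (hchain : C.IsChain G) (hne : C ≠ [])
    (hclose : ∀ x ∈ C.getLast?, ∀ y ∈ C.head?, G x y) :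
    ∃ f : ZMod (Fintype.card V) → V, IsHamCycle G f ∧
      ∀ x y, [x, y] <:+: C → Traverses f x y := by
  obtain ⟨f, hf, hlen, hfC⟩ := exists_bijective_of_list hnodup hmem hne
  have hpos : 0 < C.length := List.length_pos_iff.2 hne
  have : NeZero (Fintype.card V) := ⟨hlen ▸ hpos.ne'⟩
  refine ⟨f, ⟨hf, fun i ↦ ?_⟩, fun x y hxy ↦ ?_⟩
  · obtain ⟨k, hk, rfl⟩ : ∃ k < C.length, (k : ZMod (Fintype.card V)) = i :=
      ⟨i.val, i.val_lt.trans_eq hlen.symm, ZMod.natCast_zmod_val i⟩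
    rw [hfC k hk, ← Nat.cast_succ]
    by_cases hk' : k + 1 < C.length
    · rw [hfC (k + 1) hk']
      exact List.isChain_iff_getElem.1 hchain k hk'
    · have hk₀ : k + 1 = C.length := by omega
      have hlast : C[k] = C.getLast hne := by simp only [List.getLast_eq_getElem, ← hk₀,
        Nat.add_sub_cancel]
      rw [Nat.succ_eq_add_one, hk₀, hlen, ZMod.natCast_self, ← Nat.cast_zero, hfC 0 hpos, hlast,
        List.getElem_zero]
      exact hclose _ (List.getLast_mem_getLast? hne) _ (List.head_mem_head? hne)
  · obtain ⟨s, t, rfl⟩ := hxy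
    refine ⟨s.length, ?_, ?_⟩
    · rw [hfC s.length (by simp)]
      simp
    · rw [← Nat.cast_succ, hfC (s.length + 1) (by simp)]
      simp

section Closing

variable [DecidableEq V] {Z : Finset V} {ζ : ℕ} {Q : List V}

/-- Two vertices of `Z` are moved from the interior of `Q` to its end, whence it can be continued
to `v`. -/
lemma FlexPath.exists_reroute (hG : IsTournament G) (hZ : HasMinSemidegree G Z ζ)
    (hζ : 2 * #Z + 1 < 5 * ζ) (hQ : FlexPath G Z Q) (hZQ : ∀ z ∈ Z, z ∈ Q) (v : V) :
    ∃ U ⊆ Z, #U = 2 ∧ ∃ Q', FlexPath G (Z \ U) Q' ∧ (∀ w, w ∈ Q' ↔ w ∈ Q) ∧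
      (∀ x y, x ∉ Z → y ∉ Z → [x, y] <:+: Q → [x, y] <:+: Q') ∧
      (∀ x ∈ Q'.head?, x ∈ Q.head?) ∧ ∀ x ∈ Q'.getLast?, G x v := by
  obtain ⟨u, hu, huZ⟩ := hQ.getLast
  obtain ⟨t, ht, htZ⟩ := hQ.head
  obtain ⟨a, ha, b, hb, hua, hab, hbv⟩ := hG.exists_link hZ (U := ∅) (by simpa using hζ) u v
  rw [sdiff_empty] at ha hb
  let U : Finset V := {a, b}
  have hUZ : U ⊆ Z := by simp [U, insert_subset_iff, ha, hb]
  have hmem : ∀ x ∉ Z, decide (x ∉ U) := fun x hx ↦ decide_eq_true fun h ↦ hx (hUZ h)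
  have hab' : FlexPath G (Z \ U) [a, b] :=
    .of_isChain (by simpa using hab) (by simpa using hG.ne hab) (by simp) (by simp [U])
  refine ⟨U, hUZ, card_pair (hG.ne hab), Q.filter (· ∉ U) ++ [a, b],
    (hQ.filter hUZ).append hab' (by simp [U]) ?_, fun w ↦ ?_, fun x y hx hy hxy ↦ ?_, ?_, ?_⟩
  · rw [Option.mem_def.1 (mem_getLast?_filter hu (hmem u huZ))]
    simpa using hua
  · rcases eq_or_ne w a with rfl | hwa
    · simp [hZQ w ha]
    rcases eq_or_ne w b with rfl | hwb
    · simp [hZQ w hb]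
    · simp [U, hwa, hwb]
  · refine List.IsInfix.trans ?_ (List.prefix_append _ _).isInfix
    have hpair : [x, y].filter (· ∉ U) = [x, y] := List.filter_eq_self.2 (by
      simpa using ⟨of_decide_eq_true (hmem x hx), of_decide_eq_true (hmem y hy)⟩)
    exact hpair ▸ hxy.filter (· ∉ U)
  · rw [List.head?_append, Option.mem_def.1 (mem_head?_filter ht (hmem t htZ)),
      Option.mem_def.1 ht]
    exact fun x hx ↦ hx
  · simpa using hbv

lemma FlexPath.exists_isHamCycle_of_spanning [Fintype V] (hG : IsTournament G)
    (hZ : HasMinSemidegree G Z ζ) (hζ : 2 * #Z + 1 < 5 * ζ) (hQ : FlexPath G Z Q)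
    (hspan : ∀ v, v ∈ Q) :
    ∃ f : ZMod (Fintype.card V) → V, IsHamCycle G f ∧
      ∀ x y, x ∉ Z → y ∉ Z → [x, y] <:+: Q → Traverses f x y := by
  obtain ⟨v, hv, -⟩ := hQ.head
  obtain ⟨U, -, -, Q', hQ', hmem, hinfix, hhead, hlast⟩ :=
    hQ.exists_reroute hG hZ hζ (fun z _ ↦ hspan z) v
  have hclose : ∀ x ∈ Q'.getLast?, ∀ y ∈ Q'.head?, G x y := fun x hx y hy ↦ by
    rw [Option.mem_unique (hhead y hy) hv]
    exact hlast x hx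
  obtain ⟨f, hf, hfQ⟩ := exists_isHamCycle_of_list hQ'.nodup (fun w ↦ (hmem w).2 (hspan w))
    hQ'.isChain (List.ne_nil_of_mem ((hmem v).2 (hspan v))) hclose
  exact ⟨f, hf, fun x y hx hy hxy ↦ hfQ x y (hinfix x y hx hy hxy)⟩

lemma FlexPath.exists_isHamCycle [Fintype V] (hG : IsTournament G) (hZ : HasMinSemidegree G Z ζ)
    (hζ : 2 * #Z + 7 < 5 * ζ) (hQ : FlexPath G Z Q) (hZQ : ∀ z ∈ Z, z ∈ Q) :
    ∃ f : ZMod (Fintype.card V) → V, IsHamCycle G f ∧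
      ∀ x y, x ∉ Z → y ∉ Z → [x, y] <:+: Q → Traverses f x y := by
  obtain ⟨R, hR, hRQ, hRchain⟩ := exists_isChain_of_total (fun _ _ ↦ hG.total) Q.toFinsetᶜ
  have hmemR : ∀ x, x ∈ R ↔ x ∉ Q := fun x ↦ by
    rw [← List.mem_toFinset, hRQ, mem_compl, List.mem_toFinset]
  rcases eq_or_ne R [] with rfl | hne
  · exact hQ.exists_isHamCycle_of_spanning hG hZ (by omega) (by simpa using hmemR)
  obtain ⟨U, hUZ, hU, Q', hQ', hmem, hinfix, -, hlast⟩ :=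
    hQ.exists_reroute hG hZ (by omega) hZQ (R.head hne)
  have hRpath : FlexPath G (Z \ U) R := .of_isChain hRchain hR hne
    fun x hx hxZ ↦ (hmemR x).1 hx (hZQ x (sdiff_subset hxZ))
  have hjoin : FlexPath G (Z \ U) (Q' ++ R) := hQ'.append hRpath
    (fun x hxQ hxR ↦ (hmemR x).1 hxR ((hmem x).1 hxQ)) fun x hx y hy ↦ by
      rw [Option.mem_unique hy (List.head_mem_head? hne)]
      exact hlast x hx
  have hZU := card_sdiff_add_card_eq_card hUZ
  obtain ⟨f, hf, hfQ⟩ := hjoin.exists_isHamCycle_of_spanning hG (hZ.sdiff U) (by omega)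
    (fun v ↦ by simpa only [List.mem_append, hmem, hmemR] using em (v ∈ Q))
  exact ⟨f, hf, fun x y hx hy hxy ↦ hfQ x y (fun h ↦ hx (sdiff_subset h))
    (fun h ↦ hy (sdiff_subset h)) ((hinfix x y hx hy hxy).trans (List.prefix_append _ _).isInfix)⟩

end Closing

/-- A few disjoint paths avoiding `Y ∪ Z` are contained in a Hamilton cycle: join them to a path
through `Y` which absorbs all of `Z`, then use `Z` to close it. -/
lemma exists_isHamCycle_of_blocks [Fintype V] [Nonempty V] (hG : IsTournament G)
    {Y Z : Finset V} {α ζ : ℕ} (hY : HasMinSemidegree G Y α) (hZ : HasMinSemidegree G Z ζ)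
    (hYZ : Disjoint Y Z) {L : List (List V)} (hL : ∀ p ∈ L, p.IsChain G ∧ p ≠ [])
    (hnodup : L.flatten.Nodup) (hLYZ : ∀ x ∈ L.flatten, x ∉ Y ∧ x ∉ Z)
    (hα : 2 * #Y + 12 * #Z + 6 * L.length + 4 < 5 * α) (hζ : 2 * #Z + 7 < 5 * ζ) :
    ∃ f : ZMod (Fintype.card V) → V, IsHamCycle G f ∧
      ∀ p ∈ L, ∀ x y, [x, y] <:+: p → Traverses f x y := by
  classical
  have hYne : Y.Nonempty := card_pos.1 (by
    have := hG.two_mul_le_card_of_hasMinSemidegree hY (Classical.arbitrary V)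
    omega)
  obtain ⟨Q, hQ, hLQ, -, hcount⟩ :=
    exists_flexPath_of_blocks hG hY hYne hYZ L hL hnodup hLYZ (by omega)
  obtain ⟨Q', hQ', hQQ', hZQ', -⟩ := hQ.exists_absorb hG hY hYZ Z subset_rfl (by omega)
  obtain ⟨f, hf, hfQ'⟩ := hQ'.exists_isHamCycle hG hZ hζ hZQ'
  refine ⟨f, hf, fun p hp x y hxy ↦ ?_⟩
  have hpZ : ∀ v ∈ p, v ∉ Z := fun v hv ↦ (hLYZ v (List.mem_flatten_of_mem hp hv)).2
  exact hfQ' x y (hpZ x (hxy.subset (by simp))) (hpZ y (hxy.subset (by simp)))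
    ((hxy.trans (hLQ p hp)).trans hQQ')

/-! ### Path covers of linear forests -/

/-- `L` is a list of vertex-disjoint nonempty paths of `F` which together contain exactly the
vertices of `S` and pass through all edges of `F` inside `S`. -/
structure IsPathCover (F : V → V → Prop) (S : Finset V) (L : List (List V)) : Prop where
  isPath : ∀ p ∈ L, p.IsChain F ∧ p ≠ []
  nodup : L.flatten.Nodup
  mem_flatten : ∀ x, x ∈ L.flatten ↔ x ∈ S
  pair_infix : ∀ x ∈ S, ∀ y ∈ S, F x y → ∃ p ∈ L, [x, y] <:+: p

namespace IsPathCover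

variable {F : V → V → Prop} {S : Finset V} {L : List (List V)} {v : V}

lemma perm {L' : List (List V)} (hL : IsPathCover F S L) (h : L.Perm L') :
    IsPathCover F S L' where
  isPath p hp := hL.isPath p (h.mem_iff.2 hp)
  nodup := h.flatten.nodup_iff.1 hL.nodup
  mem_flatten x := h.flatten.mem_iff.symm.trans (hL.mem_flatten x)
  pair_infix x hx y hy hxy := (hL.pair_infix x hx y hy hxy).imp fun _ hp ↦ ⟨h.mem_iff.1 hp.1, hp.2⟩

lemma exists_perm_cons (hL : IsPathCover F S L) {y : V} (hy : y ∈ S) (hyS : ∀ x ∈ S, ¬ F x y) :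
    ∃ q L', L.Perm ((y :: q) :: L') := by
  obtain ⟨p, hp, hyp⟩ := List.mem_flatten.1 ((hL.mem_flatten y).2 hy)
  obtain ⟨l, q, rfl⟩ := List.append_of_mem hyp
  obtain ⟨L₁, L₂, rfl⟩ := List.append_of_mem hp
  rcases List.eq_nil_or_concat l with rfl | ⟨l, x, rfl⟩
  · exact ⟨q, L₁ ++ L₂, List.perm_middle⟩
  · have hchain := (hL.isPath _ hp).1
    rw [List.concat_eq_append, List.append_assoc, List.singleton_append,
      List.isChain_append_cons_cons] at hchain
    exact absurd hchain.2.1 (hyS x ((hL.mem_flatten x).1 (List.mem_flatten_of_mem hp (by simp))))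

variable [DecidableEq V]

lemma cons_singleton (hL : IsPathCover F S L) (hv : v ∉ S) (hin : ∀ x ∈ insert v S, ¬ F x v)
    (hout : ∀ y ∈ S, ¬ F v y) : IsPathCover F (insert v S) ([v] :: L) where
  isPath := List.forall_mem_cons.2 ⟨by simp, hL.isPath⟩
  nodup := List.nodup_cons.2 ⟨mt (hL.mem_flatten v).1 hv, hL.nodup⟩
  mem_flatten x := by
    rw [List.flatten_cons, List.mem_append, List.mem_singleton, hL.mem_flatten, mem_insert]
  pair_infix x hx y hy hxy := by
    rcases mem_insert.1 hy with rfl | hyS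
    · exact absurd hxy (hin x hx)
    rcases mem_insert.1 hx with rfl | hxS
    · exact absurd hxy (hout y hyS)
    · exact (hL.pair_infix x hxS y hyS hxy).imp fun _ hp ↦ ⟨List.mem_cons_of_mem _ hp.1, hp.2⟩

lemma cons_cons {y : V} {q : List V} (hL : IsPathCover F S ((y :: q) :: L)) (hv : v ∉ S)
    (hin : ∀ x ∈ insert v S, ¬ F x v) (hvy : F v y) (hout : ∀ y' ∈ S, F v y' → y' = y) :
    IsPathCover F (insert v S) ((v :: y :: q) :: L) where
  isPath := by
    have hpath := List.forall_mem_cons.1 hL.isPath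
    exact List.forall_mem_cons.2
      ⟨⟨List.isChain_cons_cons.2 ⟨hvy, hpath.1.1⟩, List.cons_ne_nil _ _⟩, hpath.2⟩
  nodup := List.nodup_cons.2 ⟨mt (hL.mem_flatten v).1 hv, hL.nodup⟩
  mem_flatten x := by
    rw [mem_insert, ← hL.mem_flatten, List.flatten_cons, List.cons_append, List.mem_cons,
      List.flatten_cons]
  pair_infix x hx z hz hxz := by
    rcases mem_insert.1 hz with rfl | hzS
    · exact absurd hxz (hin x hx)
    rcases mem_insert.1 hx with rfl | hxS
    · obtain rfl := hout z hzS hxz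
      exact ⟨_, List.mem_cons_self, [], q, rfl⟩
    · obtain ⟨p, hp, hxzp⟩ := hL.pair_infix x hxS z hzS hxz
      rcases List.mem_cons.1 hp with rfl | hp
      · exact ⟨_, List.mem_cons_self, hxzp.trans (List.suffix_cons _ _).isInfix⟩
      · exact ⟨p, List.mem_cons_of_mem _ hp, hxzp⟩

end IsPathCover

open Classical in
/-- The vertices of `S` without outneighbours in `S`. -/
noncomputable def sinks (F : V → V → Prop) (S : Finset V) : Finset V := {x ∈ S | ∀ y ∈ S, ¬ F x y}

open Classical in
lemma sinks_subset (F : V → V → Prop) (S : Finset V) : sinks F S ⊆ S := filter_subset _ _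

/-- A relation with at most one successor and at most one predecessor for every vertex, and whose
edges increase a rank function, is a union of disjoint paths. -/
lemma exists_isPathCover {ι : Type*} [LinearOrder ι] {F : V → V → Prop}
    (hF : Relator.BiUnique F) (r : V → ι) (hr : ∀ x y, F x y → r x < r y) (S : Finset V) :
    ∃ L, IsPathCover F S L ∧ L.length = #(sinks F S) := by
  classical
  induction S using Finset.induction_on_min_value r with
  | empty => exact ⟨[], ⟨by simp, by simp, by simp, by simp⟩, by simp [sinks]⟩
  | insert v S hv hmin ih =>
    obtain ⟨L, hL, hlength⟩ := ih
    have hin : ∀ x ∈ insert v S, ¬ F x v := fun x hx hxv ↦ by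
      rcases mem_insert.1 hx with rfl | hx
      · exact (hr x x hxv).false
      · exact (hr x v hxv).not_ge (hmin x hx)
    have hsinks : sinks F (insert v S) = {x ∈ insert v S | ∀ y ∈ S, ¬ F x y} :=
      filter_congr fun x hx ↦ by simp [hin x hx]
    rw [filter_insert] at hsinks
    split_ifs at hsinks with hout
    · refine ⟨[v] :: L, hL.cons_singleton hv hin hout, ?_⟩
      rw [List.length_cons, hlength, hsinks, card_insert_of_notMem (by simp [hv]), sinks]
    · push Not at hout
      obtain ⟨y, hy, hvy⟩ := hout
      obtain ⟨q, L', hperm⟩ := hL.exists_perm_cons hy fun x hx hxy ↦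
        hv (hF.1 hxy hvy ▸ hx)
      refine ⟨(v :: y :: q) :: L', (hL.perm hperm).cons_cons hv hin hvy
        fun z _ hvz ↦ hF.2 hvz hvy, ?_⟩
      rw [hsinks, ← sinks, ← hlength, hperm.length_eq, List.length_cons, List.length_cons]

/-! ### Covering sparse digraphs -/

/-- Some family of at most `m` Hamilton cycles of `G` passes through all edges of `H`. -/
def HamCoverable [Fintype V] (G H : V → V → Prop) (m : ℕ) : Prop :=
  ∃ 𝒞 : Finset (ZMod (Fintype.card V) → V), #𝒞 ≤ m ∧ (∀ f ∈ 𝒞, IsHamCycle G f) ∧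
    ∀ x y, H x y → ∃ f ∈ 𝒞, Traverses f x y

namespace HamCoverable

variable [Fintype V] {m m₁ m₂ : ℕ} {H₁ H₂ : V → V → Prop}

lemma mono (h : HamCoverable G H₂ m₁) (hH : ∀ x y, H₁ x y → H₂ x y) (hm : m₁ ≤ m₂) :
    HamCoverable G H₁ m₂ :=
  let ⟨𝒞, hcard, hham, hcover⟩ := h
  ⟨𝒞, hcard.trans hm, hham, fun x y hxy ↦ hcover x y (hH x y hxy)⟩

lemma iUnion {ι : Type*} [Fintype ι] {K : ι → V → V → Prop} (hK : ∀ i, HamCoverable G (K i) m)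
    (hH : ∀ x y, H x y → ∃ i, K i x y) : HamCoverable G H (Fintype.card ι * m) := by
  classical
  choose 𝒞 hcard hham hcover using hK
  refine ⟨univ.biUnion 𝒞, card_biUnion_le_card_mul _ _ _ fun i _ ↦ hcard i, fun f hf ↦ ?_,
    fun x y hxy ↦ ?_⟩
  · obtain ⟨i, -, hi⟩ := mem_biUnion.1 hf
    exact hham i f hi
  · obtain ⟨i, hi⟩ := hH x y hxy
    obtain ⟨f, hf, hfxy⟩ := hcover i x y hi
    exact ⟨f, mem_biUnion.2 ⟨i, mem_univ i, hf⟩, hfxy⟩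

lemma sup (h₁ : HamCoverable G H₁ m₁) (h₂ : HamCoverable G H₂ m₂)
    (hH : ∀ x y, H x y → H₁ x y ∨ H₂ x y) : HamCoverable G H (m₁ + m₂) := by
  classical
  obtain ⟨𝒞₁, hcard₁, hham₁, hcover₁⟩ := h₁
  obtain ⟨𝒞₂, hcard₂, hham₂, hcover₂⟩ := h₂
  refine ⟨𝒞₁ ∪ 𝒞₂, (card_union_le _ _).trans (add_le_add hcard₁ hcard₂), fun f hf ↦ ?_,
    fun x y hxy ↦ ?_⟩
  · exact (mem_union.1 hf).elim (hham₁ f) (hham₂ f)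
  · rcases hH x y hxy with h | h
    · obtain ⟨f, hf, hfxy⟩ := hcover₁ x y h
      exact ⟨f, mem_union_left _ hf, hfxy⟩
    · obtain ⟨f, hf, hfxy⟩ := hcover₂ x y h
      exact ⟨f, mem_union_right _ hf, hfxy⟩

end HamCoverable

lemma IsTournament.hamCoverable_of_linearForest [Fintype V] (hG : IsTournament G)
    {ι : Type*} [LinearOrder ι] {F : V → V → Prop} (hFG : ∀ x y, F x y → G x y)
    (hF : Relator.BiUnique F) (r : V → ι) (hr : ∀ x y, F x y → r x < r y) {Y Z S : Finset V}
    {α ζ p : ℕ} (hY : HasMinSemidegree G Y α) (hZ : HasMinSemidegree G Z ζ) (hYZ : Disjoint Y Z)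
    (hSY : Disjoint S Y) (hSZ : Disjoint S Z) (hp : #(sinks F S) ≤ p)
    (hα : 2 * #Y + 12 * #Z + 6 * p + 4 < 5 * α) (hζ : 2 * #Z + 7 < 5 * ζ) :
    HamCoverable G (fun x y ↦ F x y ∧ x ∈ S ∧ y ∈ S) 1 := by
  cases isEmpty_or_nonempty V
  · exact ⟨∅, by simp, by simp, fun x ↦ isEmptyElim x⟩
  obtain ⟨L, hL, hlength⟩ := exists_isPathCover hF r hr S
  obtain ⟨f, hf, hfL⟩ := exists_isHamCycle_of_blocks hG hY hZ hYZ
    (fun p hp ↦ ⟨(hL.isPath p hp).1.imp fun x y ↦ hFG x y, (hL.isPath p hp).2⟩) hL.nodup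
    (fun x hx ↦ have hxS := (hL.mem_flatten x).1 hx
      ⟨disjoint_left.1 hSY hxS, disjoint_left.1 hSZ hxS⟩) (by omega) hζ
  refine ⟨{f}, by simp, by simpa using hf, fun x y ⟨hxy, hx, hy⟩ ↦ ⟨f, mem_singleton_self f, ?_⟩⟩
  obtain ⟨q, hq, hxyq⟩ := hL.pair_infix x hx y hy hxy
  exact hfL q hq x y hxyq

lemma exists_matrix_of_sum_eq {α β : Type*} [Fintype α] [Fintype β] {r : α → ℕ} {c : β → ℕ}
    (h : ∑ x, r x = ∑ y, c y) :
    ∃ M : α → β → ℕ, (∀ x, ∑ y, M x y = r x) ∧ ∀ y, ∑ x, M x y = c y := by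
  classical
  let e : (Σ x, Fin (r x)) ≃ Σ y, Fin (c y) := Fintype.equivOfCardEq (by simp [h])
  refine ⟨fun x y ↦ #{p : Σ x, Fin (r x) | p.1 = x ∧ (e p).1 = y}, fun x ↦ ?_, fun y ↦ ?_⟩
  · have hfib := card_eq_sum_card_fiberwise (s := {p : Σ x, Fin (r x) | p.1 = x})
      (f := fun p ↦ (e p).1) (t := univ) (fun _ _ ↦ mem_univ _)
    simp_rw [filter_filter] at hfib
    rw [← hfib, ← Fintype.card_subtype, Fintype.card_congr (Equiv.sigmaSubtype x),
      Fintype.card_fin]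
  · have hfib := card_eq_sum_card_fiberwise (s := {p : Σ x, Fin (r x) | (e p).1 = y})
      (f := Sigma.fst) (t := univ) (fun _ _ ↦ mem_univ _)
    simp_rw [filter_filter, and_comm (a := _ = y)] at hfib
    rw [← hfib, ← Fintype.card_subtype, Fintype.card_congr
      ((e.subtypeEquiv fun _ ↦ Iff.rfl).trans (Equiv.sigmaSubtype y)), Fintype.card_fin]

/-- Birkhoff's theorem, applied to the doubly stochastic matrix `M / n`. -/
lemma exists_perm_of_sum_eq [Fintype V] {n : ℕ} (hn : n ≠ 0) {M : V → V → ℕ}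
    (hrow : ∀ x, ∑ y, M x y = n) (hcol : ∀ y, ∑ x, M x y = n) :
    ∃ τ : Equiv.Perm V, ∀ x, M x (τ x) ≠ 0 := by
  classical
  have hn' : (n : ℚ) ≠ 0 := Nat.cast_ne_zero.2 hn
  have hstoch : (Matrix.of fun x y ↦ (M x y / n : ℚ)) ∈ doublyStochastic ℚ V := by
    refine mem_doublyStochastic_iff_sum.2 ⟨fun x y ↦ ?_, fun x ↦ ?_, fun y ↦ ?_⟩
    · rw [Matrix.of_apply]
      positivity
    · simp only [Matrix.of_apply, ← sum_div, ← Nat.cast_sum, hrow, div_self hn']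
    · simp only [Matrix.of_apply, ← sum_div, ← Nat.cast_sum, hcol, div_self hn']
  obtain ⟨w, hw, hwsum, hwM⟩ := exists_eq_sum_perm_of_mem_doublyStochastic hstoch
  obtain ⟨τ, -, hτ⟩ := exists_ne_zero_of_sum_ne_zero (hwsum.trans_ne one_ne_zero)
  refine ⟨τ, fun x hx ↦ hτ ?_⟩
  have hentry := congrFun₂ hwM x (τ x)
  simp only [Matrix.sum_apply, Matrix.smul_apply, Matrix.of_apply, hx, Nat.cast_zero, zero_div,
    smul_eq_mul] at hentry
  have hzero := (sum_eq_zero_iff_of_nonneg fun σ _ ↦ mul_nonneg (hw σ) (by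
    rw [Equiv.Perm.permMatrix, PEquiv.toMatrix_apply]; positivity)).1 hentry τ (mem_univ τ)
  simpa [Equiv.Perm.permMatrix, PEquiv.toMatrix_apply] using hzero

lemma exists_perms_of_sum_eq [Fintype V] {n : ℕ} {M : V → V → ℕ} (hrow : ∀ x, ∑ y, M x y = n)
    (hcol : ∀ y, ∑ x, M x y = n) :
    ∃ σ : Fin n → Equiv.Perm V, ∀ x y, M x y ≠ 0 → ∃ t, σ t x = y := by
  classical
  induction n generalizing M with
  | zero =>
    exact ⟨finZeroElim, fun x y hxy ↦ absurd (sum_eq_zero_iff.1 (hrow x) y (mem_univ y)) hxy⟩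
  | succ n ih =>
    obtain ⟨τ, hτ⟩ := exists_perm_of_sum_eq n.succ_ne_zero hrow hcol
    let M' x y := M x y - if τ x = y then 1 else 0
    have hM' : ∀ x y, M' x y + (if τ x = y then 1 else 0) = M x y := fun x y ↦ by
      refine Nat.sub_add_cancel ?_
      split_ifs with h
      exacts [h ▸ Nat.one_le_iff_ne_zero.2 (hτ x), zero_le]
    obtain ⟨σ, hσ⟩ := ih (M := M')
      (fun x ↦ by simpa [← hM', sum_add_distrib] using hrow x)
      (fun y ↦ by simpa [← hM', sum_add_distrib, ← Equiv.eq_symm_apply] using hcol y)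
    refine ⟨Fin.cons τ σ, fun x y hxy ↦ ?_⟩
    by_cases hy : τ x = y
    · exact ⟨0, hy⟩
    · obtain ⟨t, ht⟩ := hσ x y (by rwa [← hM', if_neg hy] at hxy)
      exact ⟨t.succ, ht⟩

/-- König's edge colouring theorem. -/
lemma HasMaxSemidegree.exists_perms_cover [Fintype V] {D : ℕ} (hH : HasMaxSemidegree H univ D) :
    ∃ σ : Fin D → Equiv.Perm V, ∀ x y, H x y → ∃ t, σ t x = y := by
  classical
  have hflip : ∑ x, (D - outDegOn H univ x) = ∑ y, (D - inDegOn H univ y) := by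
    have hdouble : ∑ x, outDegOn H univ x = ∑ y, inDegOn H univ y :=
      sum_card_bipartiteAbove_eq_sum_card_bipartiteBelow H
    have hout := sum_tsub_distrib univ fun x _ ↦ (hH x).1
    have hin := sum_tsub_distrib univ fun x _ ↦ (hH x).2
    rw [hout, hin, hdouble]
  obtain ⟨M, hrow, hcol⟩ := exists_matrix_of_sum_eq hflip
  obtain ⟨σ, hσ⟩ := exists_perms_of_sum_eq (n := D)
    (M := fun x y ↦ (if H x y then 1 else 0) + M x y)
    (fun x ↦ by
      rw [sum_add_distrib, hrow, ← card_filter]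
      exact Nat.add_sub_cancel' (hH x).1)
    (fun y ↦ by
      rw [sum_add_distrib, hcol, ← card_filter]
      exact Nat.add_sub_cancel' (hH y).2)
  exact ⟨σ, fun x y hxy ↦ hσ x y (by simp [hxy])⟩

section SparseCover

variable [Fintype V] {Y Z : Finset V} {α ζ s N D : ℕ} {ι : Type*} [LinearOrder ι]

lemma IsTournament.hamCoverable_of_perm (hG : IsTournament G) (hHG : ∀ x y, H x y → G x y)
    (hY : HasMinSemidegree G Y α) (hZ : HasMinSemidegree G Z ζ) (hYZ : Disjoint Y Z)
    (hα : 2 * #Y + 12 * #Z + 22 * s + 4 < 5 * α) (hζ : 2 * #Z + 10 * s + 7 < 5 * ζ)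
    (σ : Equiv.Perm V) (r : V → ι) {B : Finset V} (hB : #B ≤ s) :
    HamCoverable G (fun x y ↦ H x y ∧ σ x = y ∧ r x < r y ∧ x ∈ B) 1 := by
  classical
  let X := B ∪ B.image σ
  have hXcard : #X ≤ 2 * s := (card_union_le _ _).trans <| by
    have := card_image_le (s := B) (f := σ)
    omega
  have hYX := card_le_card (sdiff_subset (s := Y) (t := X))
  have hZX := card_le_card (sdiff_subset (s := Z) (t := X))
  have hforest := hG.hamCoverable_of_linearForest (F := fun x y ↦ H x y ∧ σ x = y ∧ r x < r y)
    (fun x y h ↦ hHG x y h.1)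
    ⟨fun x z y hxy hzy ↦ σ.injective (hxy.2.1.trans hzy.2.1.symm),
      fun x y z hxy hxz ↦ hxy.2.1.symm.trans hxz.2.1⟩
    r (fun x y h ↦ h.2.2) (hY.sdiff X) (hZ.sdiff X) (hYZ.mono sdiff_subset sdiff_subset)
    disjoint_sdiff disjoint_sdiff ((card_le_card (sinks_subset _ _)).trans hXcard) (by omega)
    (by omega)
  refine hforest.mono (fun x y ⟨hxy, hσ, hr, hx⟩ ↦ ⟨⟨hxy, hσ, hr⟩, mem_union_left _ hx, ?_⟩) le_rfl
  exact mem_union_right _ (mem_image.2 ⟨x, hx, hσ⟩)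

lemma IsTournament.hamCoverable_of_lt (hG : IsTournament G) (hHG : ∀ x y, H x y → G x y)
    (hH : HasMaxSemidegree H univ D)
    (hY : HasMinSemidegree G Y α) (hZ : HasMinSemidegree G Z ζ) (hYZ : Disjoint Y Z)
    (hα : 2 * #Y + 12 * #Z + 22 * s + 4 < 5 * α) (hζ : 2 * #Z + 10 * s + 7 < 5 * ζ)
    (hs : Fintype.card V ≤ N * s) (r : V → ι) :
    HamCoverable G (fun x y ↦ H x y ∧ r x < r y) (N * D) := by
  obtain ⟨σ, hσ⟩ := hH.exists_perms_cover
  obtain ⟨e⟩ : Nonempty (V ↪ Fin N × Fin s) := Embedding.nonempty_of_card_le (by simpa using hs)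
  have hblock : ∀ j, #{x | (e x).1 = j} ≤ s := fun j ↦ by
    simpa using card_le_card_of_injOn (t := univ) (fun x ↦ (e x).2) (fun _ _ ↦ mem_univ _)
      fun x hx y hy hxy ↦ e.injective <| Prod.ext (by aesop) hxy
  have hcover := HamCoverable.iUnion (H := fun x y ↦ H x y ∧ r x < r y)
    (fun p : Fin N × Fin D ↦ hG.hamCoverable_of_perm hHG hY hZ hYZ hα hζ (σ p.2) r (hblock p.1))
    fun x y hxy ↦
      let ⟨t, ht⟩ := hσ x y hxy.1
      ⟨((e x).1, t), hxy.1, ht, hxy.2, mem_filter.2 ⟨mem_univ x, rfl⟩⟩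
  simpa using hcover

/-- Cover `H` by permutations, and cut each of these into `N` small pieces, each of which splits
into an ascending and a descending linear forest. -/
lemma IsTournament.hamCoverable_of_hasMaxSemidegree (hG : IsTournament G)
    (hHG : ∀ x y, H x y → G x y) (hH : HasMaxSemidegree H univ D)
    (hY : HasMinSemidegree G Y α) (hZ : HasMinSemidegree G Z ζ) (hYZ : Disjoint Y Z)
    (hα : 2 * #Y + 12 * #Z + 22 * s + 4 < 5 * α) (hζ : 2 * #Z + 10 * s + 7 < 5 * ζ)
    (hs : Fintype.card V ≤ N * s) : HamCoverable G H (N * D + N * D) :=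
  have r := Fintype.equivFin V
  (hG.hamCoverable_of_lt hHG hH hY hZ hYZ hα hζ hs r).sup
    (hG.hamCoverable_of_lt hHG hH hY hZ hYZ hα hζ hs fun x ↦ OrderDual.toDual (r x))
    fun x y hxy ↦ (r.injective.ne (hG.ne (hHG x y hxy))).lt_or_gt.imp (⟨hxy, ·⟩) (⟨hxy, ·⟩)

end SparseCover

/-! ### Equitable colourings -/

/-- Every vertex has at least `a` and at most `b` outneighbours in each colour class of `c`, and
likewise for inneighbours. -/
structure IsEquitableColouring [Fintype V] {κ : Type*} [DecidableEq κ] (G : V → V → Prop)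
    (c : V → κ) (a b : ℕ) : Prop where
  hasMinSemidegree : ∀ j, HasMinSemidegree G {x | c x = j} a
  hasMaxSemidegree : ∀ j, HasMaxSemidegree G {x | c x = j} b

namespace IsEquitableColouring

variable [Fintype V] {κ : Type*} [DecidableEq κ] {c : V → κ} {a b : ℕ}

lemma comp_equiv {κ' : Type*} [DecidableEq κ'] (hc : IsEquitableColouring G c a b) (e : κ ≃ κ') :
    IsEquitableColouring G (e ∘ c) a b where
  hasMinSemidegree j := by
    simpa only [comp_apply, ← Equiv.eq_symm_apply] using hc.hasMinSemidegree (e.symm j)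
  hasMaxSemidegree j := by
    simpa only [comp_apply, ← Equiv.eq_symm_apply] using hc.hasMaxSemidegree (e.symm j)

lemma outDegOn_eq_sum (G : V → V → Prop) (c : V → κ) (J : Finset κ) (v : V) :
    outDegOn G {x | c x ∈ J} v = ∑ j ∈ J, outDegOn G {x | c x = j} v := by
  classical
  rw [outDegOn, card_eq_sum_card_fiberwise (f := c) (t := J) (fun x hx ↦ by simp_all)]
  refine sum_congr rfl fun j hj ↦ congrArg card ?_
  ext x
  simp only [mem_filter, mem_univ, true_and]
  grind

lemma hasMinSemidegree_mem (hc : IsEquitableColouring G c a b) (J : Finset κ) :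
    HasMinSemidegree G {x | c x ∈ J} (#J * a) := fun v ↦ by
  constructor
  · rw [outDegOn_eq_sum]
    exact card_nsmul_le_sum _ _ _ fun j _ ↦ (hc.hasMinSemidegree j v).1
  · exact (card_nsmul_le_sum _ _ _ fun j _ ↦ (hc.hasMinSemidegree j v).2).trans_eq
      (outDegOn_eq_sum (flip G) c J v).symm

lemma hasMaxSemidegree_mem (hc : IsEquitableColouring G c a b) (J : Finset κ) :
    HasMaxSemidegree G {x | c x ∈ J} (#J * b) := fun v ↦ by
  constructor
  · rw [outDegOn_eq_sum]
    exact sum_le_card_nsmul _ _ _ fun j _ ↦ (hc.hasMaxSemidegree j v).1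
  · exact (outDegOn_eq_sum (flip G) c J v).trans_le
      (sum_le_card_nsmul _ _ _ fun j _ ↦ (hc.hasMaxSemidegree j v).2)

lemma card_mem_le (hc : IsEquitableColouring G c a b) (hG : IsTournament G) (J : Finset κ) :
    #{x | c x ∈ J} ≤ 2 * (#J * b) + 1 :=
  hG.card_le_of_hasMaxSemidegree (hc.hasMaxSemidegree_mem J)

lemma card_eq_le (hc : IsEquitableColouring G c a b) (hG : IsTournament G) (j : κ) :
    #{x | c x = j} ≤ 2 * b + 1 :=
  hG.card_le_of_hasMaxSemidegree (hc.hasMaxSemidegree j)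

end IsEquitableColouring

section Shift

variable [Fintype V] {k : ℕ} {c : V → ZMod k} {a b : ℕ}

lemma outDegOn_shift (G : V → V → Prop) (c : V → ZMod k) (d : ZMod k) (x : V) :
    outDegOn (fun x y ↦ G x y ∧ c y = c x + d) univ x = outDegOn G {y | c y = c x + d} x := by
  classical
  simp only [outDegOn, filter_filter, and_comm]

lemma inDegOn_shift (G : V → V → Prop) (c : V → ZMod k) (d : ZMod k) (y : V) :
    inDegOn (fun x y ↦ G x y ∧ c y = c x + d) univ y = inDegOn G {x | c x = c y - d} y := by
  classical
  simp only [inDegOn, filter_filter, and_comm, eq_sub_iff_add_eq, eq_comm]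

lemma IsEquitableColouring.hasMaxSemidegree_shift (hc : IsEquitableColouring G c a b)
    (d : ZMod k) : HasMaxSemidegree (fun x y ↦ G x y ∧ c y = c x + d) univ b := fun v ↦
  ⟨outDegOn_shift G c d v ▸ (hc.hasMaxSemidegree _ v).1,
    inDegOn_shift G c d v ▸ (hc.hasMaxSemidegree _ v).2⟩

end Shift

section Window

variable {k : ℕ} [NeZero k]

lemma val_add_one_of_ne_neg_one {u : ZMod k} (hu : u ≠ -1) : (u + 1).val = u.val + 1 := by
  have hcast : u + 1 = (u.val + 1 : ℕ) := by rw [Nat.cast_add_one, ZMod.natCast_zmod_val]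
  have hne : u.val + 1 ≠ k := fun h ↦ hu <| eq_neg_of_add_eq_zero_left <| by
    rw [hcast, h, ZMod.natCast_self]
  rw [hcast, ZMod.val_natCast_of_lt (lt_of_le_of_ne (ZMod.val_lt u) hne)]

lemma card_val_mem {A : Finset ℕ} (hA : ∀ j ∈ A, j < k) : #{u : ZMod k | u.val ∈ A} = #A :=
  card_nbij ZMod.val (fun u hu ↦ by simpa using hu) (ZMod.val_injective k).injOn fun j hj ↦
    ⟨j, by simpa [ZMod.val_natCast_of_lt (hA j hj)] using hj, ZMod.val_natCast_of_lt (hA j hj)⟩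

variable [Fintype V] {c : V → ZMod k} {a b m : ℕ}

lemma IsEquitableColouring.card_sinks_le (hc : IsEquitableColouring G c a b)
    (hG : IsTournament G) {σ : Equiv.Perm V} {B : Finset V} (hB : #B ≤ b)
    (hσ : ∀ x ∉ B, G x (σ x) ∧ c (σ x) = c x + 1) :
    #(sinks (fun x y ↦ G x y ∧ σ x = y ∧ (c y).val = (c x).val + 1) {x | m < (c x).val}) ≤
      3 * b + 1 := by
  classical
  have hsub : sinks (fun x y ↦ G x y ∧ σ x = y ∧ (c y).val = (c x).val + 1) {x | m < (c x).val} ⊆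
      B ∪ ({x | c x = -1} : Finset V) := fun x hx ↦ by
    simp only [sinks, mem_filter, mem_univ, true_and] at hx
    simp only [mem_union, mem_filter, mem_univ, true_and]
    by_contra! hx'
    have hval : (c (σ x)).val = (c x).val + 1 := by
      rw [(hσ x hx'.1).2, val_add_one_of_ne_neg_one hx'.2]
    exact hx.2 (σ x) (by omega) ⟨(hσ x hx'.1).1, rfl, hval⟩
  have := (card_le_card hsub).trans (card_union_le _ _)
  have := hc.card_eq_le hG (-1)
  omega

/-- A linear forest of edges `x → σ x` along which the colour increases by `1`, from the colours
above `m`, is extended to a Hamilton cycle by means of the colours `0, …, m`. -/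
lemma IsEquitableColouring.hamCoverable_of_perm (hc : IsEquitableColouring G c a b)
    (hG : IsTournament G) (hm : m < k) (hma : 4 * m * b + 42 * b + 24 < 5 * m * a)
    (hba : 4 * b + 9 < 5 * a) {σ : Equiv.Perm V} {B : Finset V} (hB : #B ≤ b)
    (hσ : ∀ x ∉ B, G x (σ x) ∧ c (σ x) = c x + 1) :
    HamCoverable G (fun x y ↦ (G x y ∧ c y = c x + 1) ∧ σ x = y ∧ m < (c x).val ∧ c x ≠ -1) 1 := by
  let J : Finset (ZMod k) := {j | j.val ∈ Icc 1 m}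
  have hJ : #J = m := by
    rw [card_val_mem fun j hj ↦ (mem_Icc.1 hj).2.trans_lt hm, Nat.card_Icc, Nat.add_sub_cancel]
  have hY := hc.card_mem_le hG J
  have hZ := hc.card_eq_le hG 0
  have hminY := hc.hasMinSemidegree_mem J
  rw [hJ] at hY hminY
  have hforest := hG.hamCoverable_of_linearForest
    (F := fun x y ↦ G x y ∧ σ x = y ∧ (c y).val = (c x).val + 1) (S := {x | m < (c x).val})
    (fun x y h ↦ h.1)
    ⟨fun x z y hxy hzy ↦ σ.injective (hxy.2.1.trans hzy.2.1.symm),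
      fun x y z hxy hxz ↦ hxy.2.1.symm.trans hxz.2.1⟩
    (fun x ↦ (c x).val) (fun x y h ↦ Nat.lt_of_succ_le h.2.2.ge) hminY (hc.hasMinSemidegree 0)
    (disjoint_filter.2 fun x _ hx h0 ↦ by simp [J, h0] at hx)
    (disjoint_filter.2 fun x _ hx hxJ ↦ by
      simp only [J, mem_filter, mem_univ, true_and, mem_Icc] at hxJ
      omega)
    (disjoint_filter.2 fun x _ hx h0 ↦ by simp [h0] at hx) (hc.card_sinks_le hG hB hσ)
    (by nlinarith) (by omega)
  refine hforest.mono (fun x y ⟨⟨hxy, hcxy⟩, hσxy, hx, hx'⟩ ↦ ?_) le_rfl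
  have hval := val_add_one_of_ne_neg_one hx'
  rw [← hcxy] at hval
  simp only [mem_filter, mem_univ, true_and]
  exact ⟨⟨hxy, hσxy, hval⟩, hx, by omega⟩

end Window

/-! ### Covering almost all edges -/

lemma outDegOn_le_sum {ι : Type*} [Fintype ι] {U : ι → V → V → Prop} {S : Finset V} {v : V}
    (hH : ∀ x y, H x y → ∃ i, U i x y) : outDegOn H S v ≤ ∑ i, outDegOn (U i) S v := by
  classical
  refine (card_le_card fun y hy ↦ ?_).trans card_biUnion_le
  obtain ⟨i, hi⟩ := hH v y (mem_filter.1 hy).2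
  exact mem_biUnion.2 ⟨i, mem_univ i, mem_filter.2 ⟨(mem_filter.1 hy).1, hi⟩⟩

lemma HasMaxSemidegree.iUnion {ι : Type*} [Fintype ι] {U : ι → V → V → Prop} {S : Finset V}
    {q : ι → ℕ} (hU : ∀ i, HasMaxSemidegree (U i) S (q i)) (hH : ∀ x y, H x y → ∃ i, U i x y) :
    HasMaxSemidegree H S (∑ i, q i) := fun v ↦
  ⟨(outDegOn_le_sum hH).trans (sum_le_sum fun i _ ↦ (hU i v).1),
    (outDegOn_le_sum (H := flip H) (U := fun i ↦ flip (U i)) fun x y ↦ hH y x).trans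
      (sum_le_sum fun i _ ↦ (hU i v).2)⟩

lemma hasMaxSemidegree_of_perms {τ : Type*} {σ : τ → Equiv.Perm V} {B B' : V → Finset τ}
    {S : Finset V} {q : ℕ} (hB : ∀ v, #(B v) ≤ q) (hB' : ∀ v, #(B' v) ≤ q)
    (hH : ∀ x y, H x y → ∃ t ∈ B x, t ∈ B' y ∧ σ t x = y) : HasMaxSemidegree H S q := by
  classical
  refine fun v ↦ ⟨(card_le_card fun y hy ↦ ?_).trans
    ((card_image_le (f := fun t ↦ σ t v)).trans (hB v)),
    (card_le_card fun x hx ↦ ?_).trans ((card_image_le (f := fun t ↦ (σ t).symm v)).trans (hB' v))⟩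
  · obtain ⟨t, ht, -, rfl⟩ := hH v y (mem_filter.1 hy).2
    exact mem_image_of_mem _ ht
  · obtain ⟨t, -, ht, rfl⟩ := hH x v (mem_filter.1 hx).2
    exact mem_image.2 ⟨t, ht, (σ t).symm_apply_apply x⟩

section AlmostCover

variable [Fintype V] {a b k m : ℕ}

open Classical in
/-- Each vertex lies outside the relation for at most `b - a` of the permutations. -/
lemma card_bad_perms_mul_le {R : V → V → Prop} {σ : Fin b → Equiv.Perm V}
    (hR : ∀ x, a ≤ outDegOn R univ x) (hσ : ∀ x y, R x y → ∃ t, σ t x = y) :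
    #{t | b < #{x | ¬ R x (σ t x)}} * b ≤ Fintype.card V * (b - a) := by
  have hvertex : ∀ x, #{t | ¬ R x (σ t x)} ≤ b - a := fun x ↦ by
    have himage : outDegOn R univ x ≤ #{t | R x (σ t x)} := by
      refine (card_le_card fun y hy ↦ ?_).trans (card_image_le (f := fun t ↦ σ t x))
      obtain ⟨t, rfl⟩ := hσ x y (mem_filter.1 hy).2
      exact mem_image_of_mem _ (mem_filter.2 ⟨mem_univ t, (mem_filter.1 hy).2⟩)
    have hsplit := card_filter_add_card_filter_not (s := univ) fun t ↦ R x (σ t x)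
    rw [card_univ, Fintype.card_fin] at hsplit
    have := hR x
    omega
  calc #{t | b < #{x | ¬ R x (σ t x)}} * b
      ≤ ∑ t with b < #{x | ¬ R x (σ t x)}, #{x | ¬ R x (σ t x)} :=
        card_nsmul_le_sum _ _ _ fun t ht ↦ (mem_filter.1 ht).2.le
    _ ≤ ∑ t, #{x | ¬ R x (σ t x)} := sum_le_sum_of_subset (filter_subset _ _)
    _ = ∑ x, #{t | ¬ R x (σ t x)} :=
        sum_card_bipartiteAbove_eq_sum_card_bipartiteBelow fun t x ↦ ¬ R x (σ t x)
    _ ≤ Fintype.card V * (b - a) := sum_le_card_nsmul _ _ _ fun x _ ↦ hvertex x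

lemma card_natCast_eq_le (u : ZMod k) :
    #{t : Fin b | ((t : ℕ) : ZMod k) = u} ≤ b / k + 1 := by
  rw [← card_range (b / k + 1)]
  refine card_le_card_of_injOn (fun t ↦ t / k) (fun t _ ↦ ?_) fun s hs t ht hst ↦ ?_
  · exact mem_coe.2 <| mem_range.2 <| Nat.lt_succ_of_le <| Nat.div_le_div_right t.2.le
  · simp only [coe_filter, mem_univ, true_and, Set.mem_ofPred_eq] at hs ht
    have hmod := (ZMod.natCast_eq_natCast_iff' _ _ k).1 (hs.trans ht.symm)
    refine Fin.ext ?_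
    rw [← Nat.div_add_mod s k, ← Nat.div_add_mod t k, hmod, show (s / k : ℕ) = t / k from hst]

section Shift

variable [Fact k.Prime] {c : V → ZMod k} {d : ZMod k}

/-- In the affine coordinate `(u - i) / d` a step by `d` becomes a step by `1`. -/
lemma IsEquitableColouring.hamCoverable_of_perm_shift (hc : IsEquitableColouring G c a b)
    (hG : IsTournament G) (hm : m < k) (hma : 4 * m * b + 42 * b + 24 < 5 * m * a)
    (hba : 4 * b + 9 < 5 * a) (hd : d ≠ 0) (i : ZMod k) {σ : Equiv.Perm V} {B : Finset V}
    (hB : #B ≤ b) (hσ : ∀ x ∉ B, G x (σ x) ∧ c (σ x) = c x + d) :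
    HamCoverable G (fun x y ↦ (G x y ∧ c y = c x + d) ∧ σ x = y ∧
      ¬ (((c x - i) / d).val ≤ m ∨ (c x - i) / d = -1)) 1 := by
  let e : ZMod k ≃ ZMod k := (Equiv.subRight i).trans (Equiv.divRight₀ d hd)
  have he : ∀ u v, v = u + d → e v = e u + 1 := by
    rintro u _ rfl
    simp only [e, Equiv.trans_apply, Equiv.subRight_apply, Equiv.divRight₀_apply]
    field_simp
    ring
  have hcover := (hc.comp_equiv e).hamCoverable_of_perm hG hm hma hba hB
    fun x hx ↦ ⟨(hσ x hx).1, he _ _ (hσ x hx).2⟩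
  refine hcover.mono (fun x y ⟨⟨hxy, hcxy⟩, hσxy, hx⟩ ↦ ?_) le_rfl
  exact ⟨⟨hxy, he _ _ hcxy⟩, hσxy, not_le.1 (not_or.1 hx).1, (not_or.1 hx).2⟩

lemma card_window_le (hm : m < k) (hd : d ≠ 0) (u : ZMod k) :
    #{t : Fin b | ((u - (t : ℕ)) / d).val ≤ m ∨ (u - (t : ℕ)) / d = -1} ≤
      (m + 2) * (b / k + 1) := by
  let W : Finset (ZMod k) := insert (-1) (univ.filter fun v ↦ v.val ∈ range (m + 1))
  have hW : #W ≤ m + 2 := by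
    refine (card_insert_le _ _).trans (Nat.succ_le_succ ?_)
    rw [card_val_mem fun j hj ↦ (Nat.lt_succ_iff.1 (mem_range.1 hj)).trans_lt hm, card_range]
  have hsub : ({t : Fin b | ((u - (t : ℕ)) / d).val ≤ m ∨ (u - (t : ℕ)) / d = -1} : Finset _) ⊆
      W.biUnion fun w ↦ {t : Fin b | ((t : ℕ) : ZMod k) = u - w * d} := fun t ht ↦ by
    refine mem_biUnion.2 ⟨(u - (t : ℕ)) / d, ?_, ?_⟩
    · simpa [W, Nat.lt_succ_iff, or_comm] using ht
    · simp [div_mul_cancel₀ _ hd]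
  exact ((card_le_card hsub).trans (card_biUnion_le_card_mul _ _ _ fun w _ ↦
    card_natCast_eq_le _)).trans (Nat.mul_le_mul_right _ hW)

open Classical in
lemma IsEquitableColouring.card_bad_perms_le (hc : IsEquitableColouring G c a b)
    (hG : IsTournament G) {σ : Fin b → Equiv.Perm V}
    (hσ : ∀ x y, G x y ∧ c y = c x + d → ∃ t, σ t x = y) :
    #{t | b < #{x | ¬ (G x (σ t x) ∧ c (σ t x) = c x + d)}} ≤ 3 * k * (b - a) := by
  rcases b.eq_zero_or_pos with rfl | hb
  · simp
  have hcard := hc.card_mem_le hG univ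
  simp only [mem_univ, filter_true, card_univ, ZMod.card] at hcard
  have hkb : 0 < k * b := Nat.mul_pos (NeZero.pos k) hb
  have hbad := card_bad_perms_mul_le
    (fun x ↦ (hc.hasMinSemidegree _ x).1.trans_eq (outDegOn_shift G c d x).symm) hσ
  refine Nat.le_of_mul_le_mul_right ((?_ : _ ≤ Fintype.card V * (b - a)).trans ?_) hb
  · convert hbad
  · calc Fintype.card V * (b - a) ≤ 3 * (k * b) * (b - a) := Nat.mul_le_mul_right _ (by omega)
      _ = 3 * k * (b - a) * b := by ring

/-- Cover the edges raising the colour by `d` by `b` permutations `σ t`, and discard those which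
are not almost contained in `G`. To each other one the window of colours starting at `t` is
applied, so that every edge lies in the first colours of its window for few `t` only. -/
lemma IsEquitableColouring.exists_cover_shift (hc : IsEquitableColouring G c a b)
    (hG : IsTournament G) (hm : m < k) (hma : 4 * m * b + 42 * b + 24 < 5 * m * a)
    (hba : 4 * b + 9 < 5 * a) (hd : d ≠ 0) :
    ∃ U, HasMaxSemidegree U univ (3 * k * (b - a) + (m + 2) * (b / k + 1)) ∧
      HamCoverable G (fun x y ↦ (G x y ∧ c y = c x + d) ∧ ¬ U x y) b := by
  classical
  let R x y := G x y ∧ c y = c x + d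
  obtain ⟨σ, hσ⟩ := (hc.hasMaxSemidegree_shift d).exists_perms_cover
  let T : Finset (Fin b) := {t | b < #{x | ¬ R x (σ t x)}}
  let W u : Finset (Fin b) := {t | ((u - (t : ℕ)) / d).val ≤ m ∨ (u - (t : ℕ)) / d = -1}
  have hTW : ∀ u, #(T ∪ W u) ≤ 3 * k * (b - a) + (m + 2) * (b / k + 1) := fun u ↦
    (card_union_le _ _).trans (add_le_add (hc.card_bad_perms_le hG hσ) (card_window_le hm hd u))
  refine ⟨fun x y ↦ R x y ∧ ∃ t ∈ T ∪ W (c x), σ t x = y,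
    hasMaxSemidegree_of_perms (σ := σ) (fun x ↦ hTW (c x)) (fun y ↦ hTW (c y - d)) ?_, ?_⟩
  · rintro x y ⟨hxy, t, ht, hty⟩
    rw [hxy.2, add_sub_cancel_right]
    exact ⟨t, ht, ht, hty⟩
  have hcover : ∀ t, HamCoverable G (fun x y ↦ t ∉ T ∧ R x y ∧ σ t x = y ∧ t ∉ W (c x)) 1 := by
    intro t
    by_cases ht : t ∈ T
    · exact ⟨∅, by simp, by simp, fun _ _ h ↦ absurd ht h.1⟩
    · refine (hc.hamCoverable_of_perm_shift hG hm hma hba hd (t : ℕ) (σ := σ t)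
        (B := {x | ¬ R x (σ t x)}) ?_ ?_).mono (fun x y h ↦ ⟨h.2.1, h.2.2.1, ?_⟩) le_rfl
      · simpa [T] using ht
      · simp [R]
      · simpa [W] using h.2.2.2
  refine (HamCoverable.iUnion hcover fun x y ⟨hxy, hU⟩ ↦ ?_).mono (fun _ _ ↦ id) (by simp)
  obtain ⟨t, rfl⟩ := hσ x y hxy
  have ht : t ∉ T ∪ W (c x) := fun ht ↦ hU ⟨hxy, t, ht, rfl⟩
  rw [notMem_union] at ht
  exact ⟨t, ht.1, hxy, rfl, ht.2⟩

lemma IsEquitableColouring.exists_almost_cover (hc : IsEquitableColouring G c a b)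
    (hG : IsTournament G) (hm : m < k) (hma : 4 * m * b + 42 * b + 24 < 5 * m * a)
    (hba : 4 * b + 9 < 5 * a) :
    ∃ U, (∀ x y, U x y → G x y) ∧
      HasMaxSemidegree U univ (k * (3 * k * (b - a) + (m + 2) * (b / k + 1)) + b) ∧
      HamCoverable G (fun x y ↦ G x y ∧ ¬ U x y) (k * b) := by
  set q := 3 * k * (b - a) + (m + 2) * (b / k + 1)
  have hshift : ∀ d : ZMod k, ∃ U, HasMaxSemidegree U univ (q + if d = 0 then b else 0) ∧
      HamCoverable G (fun x y ↦ (G x y ∧ c y = c x + d) ∧ ¬ U x y) b := fun d ↦ by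
    by_cases hd : d = 0
    · have hmax : HasMaxSemidegree (fun x y ↦ G x y ∧ c y = c x + d) univ (q + b) := fun v ↦
        (hc.hasMaxSemidegree_shift d v).imp (le_add_left ·) (le_add_left ·)
      rw [if_pos hd]
      exact ⟨_, hmax, ∅, by simp, by simp, fun _ _ h ↦ absurd h.1 h.2⟩
    · rw [if_neg hd, add_zero]
      exact hc.exists_cover_shift hG hm hma hba hd
  choose U hU hcover using hshift
  refine ⟨fun x y ↦ G x y ∧ U (c y - c x) x y, fun x y h ↦ h.1, ?_, ?_⟩
  · have hsum : ∑ d : ZMod k, (q + if d = 0 then b else 0) = k * q + b := by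
      simp [sum_add_distrib]
    exact hsum ▸ HasMaxSemidegree.iUnion hU fun x y h ↦ ⟨_, h.2⟩
  · have hunion := HamCoverable.iUnion (H := fun x y ↦ G x y ∧ ¬ (G x y ∧ U (c y - c x) x y))
      hcover fun x y h ↦ ⟨c y - c x, ⟨h.1, by ring⟩, fun hU ↦ h.2 ⟨h.1, hU⟩⟩
    rwa [ZMod.card] at hunion

end Shift

section Cover

variable {c : V → ZMod k} {D : ℕ}

/-- A thirtieth of the colours is used as absorbing set, all the others as connecting set. -/
lemma IsEquitableColouring.hamCoverable_of_hasMaxSemidegree [NeZero k]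
    (hc : IsEquitableColouring G c a b) (hG : IsTournament G) (hk : 60 ≤ k) (hkb : k ≤ b)
    (hab : 3 * k ^ 2 * (b - a) ≤ b) (hHG : ∀ x y, H x y → G x y)
    (hH : HasMaxSemidegree H univ D) : HamCoverable G H (14400 * D) := by
  let J : Finset (ZMod k) := univ.filter fun j ↦ j.val ∈ range (k / 30)
  have hJ : #J = k / 30 := by
    rw [card_val_mem fun j hj ↦ (mem_range.1 hj).trans_le (Nat.div_le_self k 30), card_range]
  obtain ⟨r, hr⟩ : ∃ r, r = k / 30 := ⟨_, rfl⟩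
  obtain ⟨l, hl⟩ : ∃ l, l = k - k / 30 := ⟨_, rfl⟩
  have hJc : #Jᶜ = l := by rw [card_compl, hJ, ZMod.card, hl]
  rw [← hr] at hJ
  have hY := hc.card_mem_le hG Jᶜ
  have hZ := hc.card_mem_le hG J
  have hV := hc.card_mem_le hG univ
  have hminY := hc.hasMinSemidegree_mem Jᶜ
  have hminZ := hc.hasMinSemidegree_mem J
  simp only [mem_univ, filter_true, card_univ, ZMod.card] at hV
  rw [hJc] at hY hminY
  rw [hJ] at hZ hminZ
  have hdisj : Disjoint ({x | c x ∈ Jᶜ} : Finset V) ({x | c x ∈ J} : Finset V) :=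
    disjoint_filter.2 fun _ _ h ↦ mem_compl.1 h
  have hkδ : 180 * (k * (b - a)) ≤ b := by
    calc 180 * (k * (b - a)) = 3 * (60 * k) * (b - a) := by ring
      _ ≤ 3 * k ^ 2 * (b - a) := by rw [sq]; gcongr
      _ ≤ b := hab
  have hloss : ∀ i ≤ k, i * b ≤ i * a + k * (b - a) := fun i hi ↦ by
    calc i * b ≤ i * (a + (b - a)) := Nat.mul_le_mul_left _ (by omega)
      _ ≤ i * a + k * (b - a) := by rw [mul_add]; gcongr
  have hla := hloss l (by omega)
  have hra := hloss r (by omega)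
  have hlr : 29 * (r * b) ≤ l * b := by rw [← mul_assoc]; gcongr; omega
  have hkr : k * b ≤ 45 * (r * b) := by rw [← mul_assoc]; gcongr; omega
  have hrb : 2 * b ≤ r * b := by gcongr; omega
  have hs : 20 * (r * (b / 20)) ≤ r * b := by
    rw [mul_left_comm]; gcongr; exact Nat.mul_div_le b 20
  have hs' : r * b ≤ 40 * (r * (b / 20)) := by
    rw [mul_left_comm]; gcongr; omega
  have hcover := hG.hamCoverable_of_hasMaxSemidegree hHG hH hminY hminZ hdisj
    (s := r * (b / 20)) (N := 7200) (by omega) (by omega) (by omega)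
  exact hcover.mono (fun _ _ ↦ id) (by omega)

lemma IsEquitableColouring.hamCoverable [Fact k.Prime] (hc : IsEquitableColouring G c a b)
    (hG : IsTournament G) (hk : 60 ≤ k) (hkb : k ≤ b) (hab : 3 * k ^ 2 * (b - a) ≤ b) :
    HamCoverable G G ((k + 14400 * 106) * b) := by
  have hδ : 10800 * (b - a) ≤ b := (Nat.mul_le_mul_right _ (by nlinarith)).trans hab
  obtain ⟨U, hUG, hU, hcover⟩ :=
    hc.exists_almost_cover hG (m := 50) (by omega) (by omega) (by omega)
  have hD : k * (3 * k * (b - a) + (50 + 2) * (b / k + 1)) + b ≤ 106 * b := by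
    have hdiv : k * (b / k) ≤ b := Nat.mul_div_le b k
    calc _ = 3 * k ^ 2 * (b - a) + 52 * (k * (b / k)) + 52 * k + b := by ring
      _ ≤ 106 * b := by omega
  have hsparse := hc.hamCoverable_of_hasMaxSemidegree hG hk hkb hab hUG
    fun v ↦ (hU v).imp (le_trans · hD) (le_trans · hD)
  refine (hcover.sup hsparse fun x y hxy ↦ ?_).mono (fun _ _ ↦ id) (by ring_nf; rfl)
  exact (em (U x y)).symm.imp_left fun h ↦ ⟨hxy, h⟩

end Cover

end AlmostCover

/-! ### Random colourings -/

section RandomColouring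

open MeasureTheory ProbabilityTheory Filter Topology

variable [Fintype V] {κ : Type*} {t : ℝ}

lemma measureReal_le_abs_sum_sub_integral_le [MeasurableSpace κ] {μ : Measure κ}
    [IsProbabilityMeasure μ] {f : V → κ → ℝ} (hmeas : ∀ x, Measurable (f x))
    (hf : ∀ x u, f x u ∈ Set.Icc 0 1) (ht : 0 ≤ t) :
    (Measure.pi fun _ : V ↦ μ).real {c | t ≤ |∑ x, (f x (c x) - ∫ u, f x u ∂μ)|} ≤
      2 * Real.exp (-2 * t ^ 2 / Fintype.card V) := by
  have hsub : HasSubgaussianMGF (fun c : V → κ ↦ ∑ x, (f x (c x) - ∫ u, f x u ∂μ))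
      (∑ _x : V, (‖(1 : ℝ) - 0‖₊ / 2) ^ 2) (Measure.pi fun _ ↦ μ) := by
    refine HasSubgaussianMGF.sum_of_iIndepFun
      (iIndepFun_pi fun x ↦ ((hmeas x).sub_const _).aemeasurable) fun x _ ↦ ?_
    refine HasSubgaussianMGF.of_map (X := fun u ↦ f x u - ∫ u, f x u ∂μ)
      (measurable_pi_apply x).aemeasurable ?_
    rw [(measurePreserving_eval (fun _ : V ↦ μ) x).map_eq]
    exact hasSubgaussianMGF_of_mem_Icc (hmeas x).aemeasurable (ae_of_all _ (hf x))
  have hexp : -t ^ 2 / (2 * ((∑ _x : V, (‖(1 : ℝ) - 0‖₊ / 2) ^ 2 : NNReal) : ℝ)) =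
      -2 * t ^ 2 / Fintype.card V := by
    simp
    ring
  have hunion : {c : V → κ | t ≤ |∑ x, (f x (c x) - ∫ u, f x u ∂μ)|} =
      {c | t ≤ ∑ x, (f x (c x) - ∫ u, f x u ∂μ)} ∪
        {c | t ≤ -∑ x, (f x (c x) - ∫ u, f x u ∂μ)} := by
    ext c
    exact le_abs (α := ℝ)
  rw [hunion, ← hexp, two_mul]
  exact (measureReal_union_le _ _).trans
    (add_le_add (hsub.measure_ge_le ht) (hsub.neg.measure_ge_le ht))

variable [Fintype κ] [Nonempty κ] [DecidableEq κ]

lemma exists_colouring_of_mul_exp_lt {ι : Type*} [Fintype ι] (A : ι → Finset V) (ht : 0 ≤ t)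
    (hexp : Fintype.card ι * Fintype.card κ *
      (2 * Real.exp (-2 * t ^ 2 / Fintype.card V)) < 1) :
    ∃ c : V → κ, ∀ i j, |(#{x ∈ A i | c x = j} : ℝ) - #(A i) / Fintype.card κ| < t := by
  classical
  let : MeasurableSpace κ := ⊤
  let μ : Measure κ := uniformOn Set.univ
  let f i j x (u : κ) : ℝ := if x ∈ A i ∧ u = j then 1 else 0
  let bad i j := {c : V → κ | t ≤ |∑ x, (f i j x (c x) - ∫ u, f i j x u ∂μ)|}
  have hsum : ∀ i j (c : V → κ), ∑ x, (f i j x (c x) - ∫ u, f i j x u ∂μ) =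
      #{x ∈ A i | c x = j} - #(A i) / Fintype.card κ := fun i j c ↦ by
    have hmean : ∀ x, ∫ u, f i j x u ∂μ = if x ∈ A i then (Fintype.card κ : ℝ)⁻¹ else 0 := by
      intro x
      split_ifs with hx
      · have : f i j x = Set.indicator {j} 1 := by
          ext u
          simp [f, hx, Set.indicator_apply]
        rw [this, integral_indicator_one (MeasurableSet.singleton j), measureReal_def,
          uniformOn_univ]
        simp
      · simp [f, hx]
    simp only [sum_sub_distrib, hmean, f]
    simp [div_eq_mul_inv, sum_boole, filter_and, inter_filter]
  have hbad : (Measure.pi fun _ : V ↦ μ).real (⋃ p : ι × κ, bad p.1 p.2) < 1 := by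
    calc _ ≤ ∑ p : ι × κ, (Measure.pi fun _ : V ↦ μ).real (bad p.1 p.2) :=
          measureReal_iUnion_fintype_le _
      _ ≤ ∑ _p : ι × κ, 2 * Real.exp (-2 * t ^ 2 / Fintype.card V) :=
          sum_le_sum fun p _ ↦ measureReal_le_abs_sum_sub_integral_le (fun _ ↦ measurable_from_top)
            (fun x u ↦ by simp only [f]; split_ifs <;> simp) ht
      _ < 1 := by simpa [mul_assoc] using hexp
  obtain ⟨c, hc⟩ : ∃ c, c ∉ ⋃ p : ι × κ, bad p.1 p.2 := by
    by_contra! hall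
    rw [Set.eq_univ_of_forall hall, probReal_univ] at hbad
    exact hbad.ne rfl
  refine ⟨c, fun i j ↦ ?_⟩
  rw [← hsum]
  exact not_le.1 fun h ↦ hc (Set.mem_iUnion.2 ⟨(i, j), h⟩)

lemma exists_isEquitableColouring {r s : ℝ}
    (hout : ∀ v, |(outDegOn G univ v : ℝ) - r| ≤ s) (hin : ∀ v, |(inDegOn G univ v : ℝ) - r| ≤ s)
    (ht : 0 ≤ t) (hexp : 2 * Fintype.card V * Fintype.card κ *
      (2 * Real.exp (-2 * t ^ 2 / Fintype.card V)) < 1) :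
    ∃ c : V → κ, IsEquitableColouring G c ⌈r / Fintype.card κ - (s / Fintype.card κ + t)⌉₊
      ⌊r / Fintype.card κ + (s / Fintype.card κ + t)⌋₊ := by
  classical
  obtain ⟨c, hc⟩ := exists_colouring_of_mul_exp_lt (κ := κ) (t := t)
    (Sum.elim (fun v : V ↦ ({y | G v y} : Finset V)) fun v : V ↦ ({y | G y v} : Finset V)) ht
    (by rwa [Fintype.card_sum, Nat.cast_add, ← two_mul])
  have hclose : ∀ {d e : ℕ}, |(d : ℝ) - r| ≤ s → |(e : ℝ) - d / Fintype.card κ| < t →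
      ⌈r / Fintype.card κ - (s / Fintype.card κ + t)⌉₊ ≤ e ∧
        e ≤ ⌊r / Fintype.card κ + (s / Fintype.card κ + t)⌋₊ := fun {d e} hd he ↦ by
    have hd' : |(d : ℝ) / Fintype.card κ - r / Fintype.card κ| ≤ s / Fintype.card κ := by
      rw [← sub_div, abs_div, Nat.abs_cast]
      gcongr
    rw [abs_le] at hd'
    rw [abs_lt] at he
    exact ⟨Nat.ceil_le.2 (by linarith), Nat.le_floor (by linarith)⟩
  have hfilter : ∀ v j, outDegOn G {x | c x = j} v = #{y ∈ {y | G v y} | c y = j} := fun v j ↦ by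
    simp only [outDegOn, filter_filter, and_comm]
  have hfilter' : ∀ v j, inDegOn G {x | c x = j} v = #{y ∈ {y | G y v} | c y = j} := fun v j ↦ by
    simp only [inDegOn, filter_filter, and_comm]
  have h v j := hclose (hout v) (hc (Sum.inl v) j)
  have h' v j := hclose (hin v) (hc (Sum.inr v) j)
  simp only [Sum.elim_inl, Sum.elim_inr, ← hfilter, ← hfilter'] at h h'
  exact ⟨c, fun j v ↦ ⟨(h v j).1, (h' v j).1⟩, fun j v ↦ ⟨(h v j).2, (h' v j).2⟩⟩

lemma eventually_mul_mul_exp_lt_one (C : ℝ) {ε : ℝ} (hε : 0 < ε) :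
    ∀ᶠ n : ℕ in atTop, C * n * Real.exp (-2 * (ε * n) ^ 2 / n) < 1 := by
  have hlim : Tendsto (fun n : ℕ ↦ C * (2 * ε ^ 2)⁻¹ * ((2 * ε ^ 2 * n) ^ 1 *
      Real.exp (-(2 * ε ^ 2 * n)))) atTop (𝓝 (C * (2 * ε ^ 2)⁻¹ * 0)) :=
    ((Real.tendsto_pow_mul_exp_neg_atTop_nhds_zero 1).comp
      (tendsto_natCast_atTop_atTop.const_mul_atTop (by positivity))).const_mul _
  rw [mul_zero] at hlim
  filter_upwards [hlim.eventually_lt_const one_pos, eventually_gt_atTop 0] with n hn hpos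
  have hexp : -2 * (ε * n) ^ 2 / n = -(2 * ε ^ 2 * n) := by
    field_simp
  refine lt_of_eq_of_lt ?_ hn
  rw [hexp]
  field_simp

end RandomColouring

/-! ### Almost regular tournaments -/

section AlmostRegular

variable [Fintype V] {k : ℕ}

lemma HamCoverable.exists_fin {m : ℕ} (h : HamCoverable G H m) :
    ∃ l ≤ m, ∃ C : Fin l → ZMod (Fintype.card V) → V, (∀ j, IsHamCycle G (C j)) ∧
      ∀ x y, H x y → ∃ j i, C j i = x ∧ C j (i + 1) = y := by
  obtain ⟨𝒞, h𝒞, hham, hcover⟩ := h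
  refine ⟨#𝒞, h𝒞, fun j ↦ 𝒞.equivFin.symm j, fun j ↦ hham _ (𝒞.equivFin.symm j).2,
    fun x y hxy ↦ ?_⟩
  obtain ⟨f, hf, i, hi⟩ := hcover x y hxy
  exact ⟨𝒞.equivFin ⟨f, hf⟩, i, by simpa only [Equiv.symm_apply_apply] using hi⟩

lemma outDegOn_univ (G : V → V → Prop) (v : V) : outDegOn G univ v = outDeg G v := by
  classical
  rw [outDegOn, outDeg, Nat.card_eq_fintype_card, Fintype.card_subtype]

lemma IsTournament.abs_inDegOn_sub_le (hG : IsTournament G) {s : ℝ} {v : V}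
    (hv : |(outDegOn G univ v : ℝ) - Fintype.card V / 2| ≤ s) :
    |(inDegOn G univ v : ℝ) - Fintype.card V / 2| ≤ s + 1 := by
  classical
  have hsum : (outDegOn G univ v : ℝ) + inDegOn G univ v + 1 = Fintype.card V := by
    have h := hG.outDegOn_add_inDegOn univ v
    rw [← card_univ, ← card_erase_add_one (mem_univ v), ← h]
    push_cast
    rfl
  rw [abs_le] at hv ⊢
  constructor <;> linarith

lemma equitable_bounds {u δ : ℝ} (hk : 1 ≤ k) (hu : 1 ≤ u) (hδ : 0 ≤ δ) (hδu : δ ≤ 2 * u) :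
    k ≤ ⌊14 * k ^ 2 * u + δ⌋₊ ∧
      3 * k ^ 2 * (⌊14 * k ^ 2 * u + δ⌋₊ - ⌈14 * k ^ 2 * u - δ⌉₊) ≤ ⌊14 * k ^ 2 * u + δ⌋₊ := by
  set b := ⌊14 * k ^ 2 * u + δ⌋₊
  set a := ⌈14 * k ^ 2 * u - δ⌉₊
  have hk' : (1 : ℝ) ≤ k := by exact_mod_cast hk
  have hku : (k : ℝ) ≤ k ^ 2 * u := by nlinarith
  have hb : 14 * k ^ 2 * u + δ < b + 1 := Nat.lt_floor_add_one _
  have hba : ((b - a : ℕ) : ℝ) ≤ 2 * δ := by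
    have ha : 14 * k ^ 2 * u - δ ≤ a := Nat.le_ceil _
    have hb' : (b : ℝ) ≤ 14 * k ^ 2 * u + δ := Nat.floor_le (by positivity)
    rcases le_total a b with h | h
    · rw [Nat.cast_sub h]
      linarith
    · rw [Nat.sub_eq_zero_of_le h, Nat.cast_zero]
      positivity
  refine ⟨by exact_mod_cast (by linarith : (k : ℝ) ≤ b), ?_⟩
  have hmul : 3 * (k : ℝ) ^ 2 * (b - a : ℕ) ≤ b := by
    calc 3 * (k : ℝ) ^ 2 * (b - a : ℕ) ≤ 3 * k ^ 2 * (2 * (2 * u)) := by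
          gcongr
          exact hba.trans (by gcongr)
      _ ≤ (b : ℝ) := by linarith
  exact_mod_cast hmul

lemma cover_ratio_le {k M ξ : ℝ} (hk : 1 ≤ k) (hM : 0 ≤ M) (hξ : M + 1 ≤ ξ * k) :
    (k + M) * ((14 * k ^ 2 + 2) * (1 / (28 * k ^ 3))) ≤ 1 / 2 + ξ := by
  have hk2 : k ≤ k ^ 2 := le_self_pow₀ hk two_ne_zero
  rw [mul_one_div, mul_div_assoc', div_le_iff₀ (by positivity)]
  calc (k + M) * (14 * k ^ 2 + 2) = 14 * k ^ 3 + 14 * M * k ^ 2 + 2 * (k + M) := by ring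
    _ ≤ 14 * k ^ 3 + 28 * (M + 1) * k ^ 2 := by nlinarith
    _ ≤ 14 * k ^ 3 + 28 * (ξ * k) * k ^ 2 := by gcongr
    _ = (1 / 2 + ξ) * (28 * k ^ 3) := by ring

/-- With degrees `n / 2 ± (u + 1)`, where `n = 28 k³ u`, and sampling error `u`, the class degrees
are `14 k² u ± 2 u`. -/
lemma IsTournament.exists_hamCoverable [Fact k.Prime] (hG : IsTournament G) (hk : 60 ≤ k) {u : ℝ}
    (hu : 1 ≤ u) (hV : Fintype.card V = 28 * k ^ 3 * u)
    (hdeg : ∀ v, |(outDeg G v : ℝ) - Fintype.card V / 2| ≤ u)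
    (hexp : 4 * k * Fintype.card V * Real.exp (-2 * u ^ 2 / Fintype.card V) < 1) :
    ∃ b : ℕ, (b : ℝ) ≤ (14 * k ^ 2 + 2) * u ∧ HamCoverable G G ((k + 14400 * 106) * b) := by
  have hk' : (60 : ℝ) ≤ k := by exact_mod_cast hk
  have hdeg' : ∀ v, |(outDegOn G univ v : ℝ) - Fintype.card V / 2| ≤ u :=
    fun v ↦ outDegOn_univ G v ▸ hdeg v
  obtain ⟨c, hc⟩ := exists_isEquitableColouring (κ := ZMod k) (s := u + 1) (t := u)
    (fun v ↦ (hdeg' v).trans (by linarith)) (fun v ↦ hG.abs_inDegOn_sub_le (hdeg' v))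
    (by linarith) (by rw [ZMod.card]; linarith)
  have hmean : (Fintype.card V : ℝ) / 2 / k = 14 * k ^ 2 * u := by
    rw [hV]
    field_simp
    norm_num
  rw [ZMod.card, hmean] at hc
  have hδ : 0 ≤ (u + 1) / k + u := by positivity
  have hδu : (u + 1) / k + u ≤ 2 * u := by
    have : (u + 1) / k ≤ u := (div_le_iff₀ (by positivity)).2 (by nlinarith)
    linarith
  obtain ⟨hkb, hab⟩ := equitable_bounds (k := k) (by omega) hu hδ hδu
  refine ⟨_, (Nat.floor_le (by positivity)).trans ?_, hc.hamCoverable hG hk hkb hab⟩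
  linarith

end AlmostRegular

lemma abs_natCast_sub_half_le {d n : ℕ} (h : d = (n - 1) / 2) : |(d : ℝ) - n / 2| ≤ 1 := by
  have hle : 2 * d ≤ n := by omega
  have hge : n ≤ 2 * d + 2 := by omega
  rify at hle hge
  rw [abs_le]
  constructor <;> linarith

theorem regular_tournament_hamilton_cover_general {ξ : ℝ} (hξ : 0 < ξ) :
    ∃ η : ℝ, 0 < η ∧ ∃ n₀ : ℕ, ∀ (V : Type*) [Fintype V] (G : V → V → Prop),
      n₀ ≤ Fintype.card V →
      IsTournament G →
      (∀ x : V, |(outDeg G x : ℝ) - Fintype.card V / 2| ≤ η * Fintype.card V) →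
      ∃ (m : ℕ) (C : Fin m → ZMod (Fintype.card V) → V),
        (m : ℝ) ≤ (1 / 2 + ξ) * (Fintype.card V : ℝ) ∧
        (∀ j, IsHamCycle G (C j)) ∧
        ∀ x y : V, G x y → ∃ (j : Fin m) (i : ZMod (Fintype.card V)),
          C j i = x ∧ C j (i + 1) = y := by
  obtain ⟨k, hk, hkprime⟩ := Nat.exists_infinite_primes (max 60 ⌈(14400 * 106 + 1) / ξ⌉₊)
  have : Fact k.Prime := ⟨hkprime⟩
  have hk60 : 60 ≤ k := (le_max_left _ _).trans hk
  have hkξ : 14400 * 106 + 1 ≤ ξ * k :=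
    (div_le_iff₀' hξ).1 (Nat.ceil_le.1 ((le_max_right _ _).trans hk))
  have hη : (0 : ℝ) < 1 / (28 * k ^ 3) := by positivity
  obtain ⟨n₀, hn₀⟩ := Filter.eventually_atTop.1 (eventually_mul_mul_exp_lt_one (4 * k) hη)
  refine ⟨_, hη, max n₀ (28 * k ^ 3), fun V _ G hn hG hdeg ↦ ?_⟩
  have hV : (28 * k ^ 3 : ℝ) ≤ Fintype.card V := by exact_mod_cast (le_max_right _ _).trans hn
  obtain ⟨b, hb, hcover⟩ := hG.exists_hamCoverable hk60
    (by rwa [one_div_mul_eq_div, one_le_div (by positivity)]) (by field_simp) hdeg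
    (hn₀ _ ((le_max_left _ _).trans hn))
  obtain ⟨l, hl, C, hC⟩ := hcover.exists_fin
  have hlb : (l : ℝ) ≤ (k + 14400 * 106) * b := by exact_mod_cast hl
  refine ⟨l, C, ?_, hC⟩
  calc (l : ℝ) ≤ (k + 14400 * 106) *
        ((14 * k ^ 2 + 2) * (1 / (28 * k ^ 3) * Fintype.card V)) := hlb.trans (by gcongr)
    _ = (k + 14400 * 106) * ((14 * k ^ 2 + 2) * (1 / (28 * k ^ 3))) * Fintype.card V := by ring
    _ ≤ (1 / 2 + ξ) * Fintype.card V := by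
      gcongr
      exact cover_ratio_le (by exact_mod_cast hkprime.one_le) (by norm_num) hkξ

end HamiltonCover

/-- For every ξ > 0 there exists n₀ such that every regular tournament on n ≥ n₀ vertices
contains a set of at most (1/2 + ξ)n Hamilton cycles which together cover all its edges. -/
theorem regular_tournament_hamilton_cover (ξ : ℝ) (hξ : 0 < ξ) :
    ∃ n₀ : ℕ, ∀ (V : Type) [Fintype V] (G : V → V → Prop),
      n₀ ≤ Fintype.card V →
      IsTournament G →
      (∀ x : V, outDeg G x = (Fintype.card V - 1) / 2 ∧
        inDeg G x = (Fintype.card V - 1) / 2) →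
      ∃ (m : ℕ) (C : Fin m → ZMod (Fintype.card V) → V),
        (m : ℝ) ≤ (1 / 2 + ξ) * (Fintype.card V : ℝ) ∧
        (∀ j, IsHamCycle G (C j)) ∧
        ∀ x y : V, G x y → ∃ (j : Fin m) (i : ZMod (Fintype.card V)),
          C j i = x ∧ C j (i + 1) = y := by
  obtain ⟨η, hη, n₀, hn₀⟩ := regular_tournament_hamilton_cover_general hξ
  refine ⟨max n₀ ⌈1 / η⌉₊, fun V _ G hn hG hreg ↦
    hn₀ V G ((le_max_left _ _).trans hn) hG fun x ↦ ?_⟩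
  have hηn : 1 ≤ η * Fintype.card V :=
    (div_le_iff₀' hη).1 (Nat.ceil_le.1 ((le_max_right _ _).trans hn))
  exact (abs_natCast_sub_half_le (hreg x).1).trans hηn
end

section
/- For every ξ > 0 there is an integer n₀ = n₀(ξ) such that every d-regular (undirected) graph G on n ≥ n₀ vertices with d ≥ (1/2 + ξ)n contains a set of at most (d + ξn)/2 Hamilton cycles which together cover all the edges of G. -/
/-!
Split the vertices at random into `2 * m` classes. By Hoeffding's inequality every vertex has about
`d / (2 * m)` neighbours in each class. Walecki's `m` zigzag paths on the classes together use every
pair of distinct classes, and by König's theorem the edges of `G` running along one zigzag path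
split into `D ≈ d / (2 * m)` linear forests. Each forest is completed to a cyclic ordering of the
vertices, which gives `m * D ≈ d / 2` cyclic orderings containing all edges between different
classes. A count shows that only `o(n ^ 2)` consecutive pairs in these orderings are not edges of
`G`.

Since the minimum degree exceeds `n / 2`, such a pair can be removed by reversing a segment, at the
price of one edge of `G`, and the edge sacrificed can be chosen to avoid any prescribed set of at
most about `ξ * n` vertices. Protecting the vertices that have already lost many edges, one turns
all the orderings into Hamilton cycles while the uncovered edges keep maximum degree `o(n)`. These
are again split into linear forests. Each forest is covered by boundedly many Hamilton cycles, since
the edges meeting a small vertex set survive when that set is protected throughout the repair.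
-/

namespace HamiltonCover

open Finset

variable {V : Type*}

section ListEdges

/-- The edges joining consecutive entries of a list, with multiplicity. -/
def pathEdges : List V → Multiset (Sym2 V)
  | a :: b :: l => s(a, b) ::ₘ pathEdges (b :: l)
  | _ => 0

/-- The edges joining cyclically consecutive entries of a list, with multiplicity. A list read
cyclically is how candidate Hamilton cycles are represented before all their edges lie in the
graph. -/
def cycleEdges (l : List V) : Multiset (Sym2 V) := pathEdges (l ++ l.take 1)

@[simp] lemma pathEdges_nil : pathEdges ([] : List V) = 0 := rfl

@[simp] lemma pathEdges_singleton (a : V) : pathEdges [a] = 0 := rfl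

@[simp] lemma pathEdges_cons_cons (a b : V) (l : List V) :
    pathEdges (a :: b :: l) = s(a, b) ::ₘ pathEdges (b :: l) := rfl

lemma cycleEdges_cons (a : V) (l : List V) :
    cycleEdges (a :: l) = pathEdges (a :: (l ++ [a])) := rfl

lemma pathEdges_append_cons (l₁ : List V) (a : V) (l₂ : List V) :
    pathEdges (l₁ ++ a :: l₂) = pathEdges (l₁ ++ [a]) + pathEdges (a :: l₂) := by
  induction l₁ with
  | nil => simp
  | cons b l₁ ih => cases l₁ <;> simp_all

lemma pathEdges_reverse (l : List V) : pathEdges l.reverse = pathEdges l := by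
  induction l with
  | nil => rfl
  | cons a l ih =>
    cases l with
    | nil => rfl
    | cons b l =>
      rw [List.reverse_cons] at ih
      simp only [List.reverse_cons, List.append_assoc, List.singleton_append]
      rw [pathEdges_append_cons, ih]
      rw [pathEdges_cons_cons, pathEdges_cons_cons, Sym2.eq_swap, add_comm]
      rfl

lemma card_pathEdges_cons (a : V) (l : List V) : (pathEdges (a :: l)).card = l.length := by
  induction l generalizing a with
  | nil => rfl
  | cons b l ih => simp [ih]

lemma card_cycleEdges (l : List V) : (cycleEdges l).card = l.length := by
  cases l with
  | nil => rfl
  | cons a l => simp [cycleEdges_cons, card_pathEdges_cons]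

lemma mem_pathEdges {l : List V} {e : Sym2 V} :
    e ∈ pathEdges l ↔ ∃ a b, [a, b] <:+: l ∧ e = s(a, b) := by
  induction l with
  | nil => simp
  | cons a l ih =>
    cases l with
    | nil => simp [List.infix_cons_iff]
    | cons b l =>
      rw [pathEdges_cons_cons, Multiset.mem_cons, ih]
      constructor
      · rintro (rfl | ⟨c, d, h, rfl⟩)
        · exact ⟨a, b, ⟨[], l, rfl⟩, rfl⟩
        · exact ⟨c, d, List.infix_cons h, rfl⟩
      · rintro ⟨c, d, h, rfl⟩
        rcases List.infix_cons_iff.1 h with h | h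
        · obtain ⟨rfl, rfl⟩ : c = a ∧ d = b := by simpa using h
          exact .inl rfl
        · exact .inr ⟨c, d, h, rfl⟩

lemma mk_mem_cycleEdges {l : List V} {a b : V} (h : [a, b] <:+: l) :
    s(a, b) ∈ cycleEdges l :=
  mem_pathEdges.2 ⟨a, b, h.trans List.infix_append_left, rfl⟩

lemma cycleEdges_append_comm (l₁ l₂ : List V) :
    cycleEdges (l₁ ++ l₂) = cycleEdges (l₂ ++ l₁) := by
  rcases l₁ with _ | ⟨a, l₁⟩
  · simp
  rcases l₂ with _ | ⟨b, l₂⟩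
  · simp
  have hsplit := fun (x y : V) (s t : List V) => pathEdges_append_cons (x :: s) y (t ++ [x])
  simp only [List.cons_append] at hsplit
  simp only [List.cons_append, cycleEdges_cons, List.append_assoc, hsplit]
  rw [add_comm]

lemma exists_perm_cons_cons_of_mem_cycleEdges {l : List V} (hl : 2 ≤ l.length) {e : Sym2 V}
    (he : e ∈ cycleEdges l) :
    ∃ a b l', (a :: b :: l').Perm l ∧ cycleEdges (a :: b :: l') = cycleEdges l ∧ e = s(a, b) := by
  obtain ⟨x, t, rfl⟩ := List.exists_cons_of_length_pos (by omega : 0 < l.length)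
  rw [cycleEdges_cons] at he
  obtain ⟨a, b, ⟨l₁, l₂, h⟩, rfl⟩ := mem_pathEdges.1 he
  rcases l₂.eq_nil_or_concat with rfl | ⟨l₂, y, rfl⟩
  · obtain ⟨h, rfl⟩ : l₁ ++ [a] = x :: t ∧ b = x := by
      simpa using List.append_inj' (s₁ := l₁ ++ [a]) (t₁ := [b]) (s₂ := x :: t) (t₂ := [x])
        (by simpa using h) rfl
    obtain ⟨l₁, rfl⟩ : ∃ l₁', l₁ = b :: l₁' := by
      rcases l₁ with _ | ⟨c, l₁⟩ <;> simp_all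
    rw [← h]
    exact ⟨a, b, l₁, List.perm_append_comm (l₁ := [a]),
      cycleEdges_append_comm [a] (b :: l₁), rfl⟩
  · obtain ⟨h, rfl⟩ : l₁ ++ a :: b :: l₂ = x :: t ∧ y = x := by
      simpa using List.append_inj' (s₁ := l₁ ++ a :: b :: l₂) (t₁ := [y]) (s₂ := x :: t)
        (t₂ := [x]) (by simpa using h) rfl
    rw [← h]
    exact ⟨a, b, l₂ ++ l₁, List.perm_append_comm (l₁ := a :: b :: l₂),
      cycleEdges_append_comm (a :: b :: l₂) l₁, rfl⟩

lemma cycleEdges_reverse_segment (a b v w : V) (l₁ l₂ : List V) :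
    s(a, b) ::ₘ s(v, w) ::ₘ cycleEdges (a :: v :: (l₁.reverse ++ b :: w :: l₂)) =
      s(a, v) ::ₘ s(b, w) ::ₘ cycleEdges (a :: b :: (l₁ ++ v :: w :: l₂)) := by
  have hrev : pathEdges (v :: (l₁.reverse ++ [b])) = pathEdges (b :: (l₁ ++ [v])) := by
    rw [← pathEdges_reverse]; simp
  have hsplit := fun (x y z : V) (s t : List V) => pathEdges_append_cons (x :: s) y (z :: t)
  simp only [List.cons_append] at hsplit
  simp only [cycleEdges_cons, List.cons_append, List.append_assoc, pathEdges_cons_cons, hsplit,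
    hrev, ← Multiset.singleton_add]
  abel

lemma exists_infix_pair_of_length_lt (p q : V → Prop) [DecidablePred p] [DecidablePred q] (a : V)
    (l : List V) (h : (a :: l).length < (a :: l).countP p + l.countP q) :
    ∃ v w, [v, w] <:+: a :: l ∧ p v ∧ q w := by
  induction l generalizing a with
  | nil => grind
  | cons b l ih =>
    by_cases hab : p a ∧ q b
    · exact ⟨a, b, ⟨[], l, rfl⟩, hab⟩
    · obtain ⟨v, w, hvw, hpq⟩ := ih b (by grind)
      exact ⟨v, w, List.infix_cons hvw, hpq⟩

end ListEdges

/-- The list meets every vertex exactly once. -/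
def IsEnumeration [Fintype V] (l : List V) : Prop := (l : Multiset V) = univ.val

section Enumeration

variable [Fintype V] {l l' : List V}

lemma IsEnumeration.of_perm (hl : IsEnumeration l) (h : l'.Perm l) : IsEnumeration l' :=
  (Multiset.coe_eq_coe.2 h).trans hl

lemma IsEnumeration.nodup (hl : IsEnumeration l) : l.Nodup := by
  rw [← Multiset.coe_nodup, hl]
  exact univ.nodup

lemma IsEnumeration.length_eq (hl : IsEnumeration l) : l.length = Fintype.card V :=
  congrArg Multiset.card hl

lemma IsEnumeration.countP_eq (hl : IsEnumeration l) (p : V → Prop) [DecidablePred p] :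
    l.countP p = #{v | p v} := by
  rw [← Multiset.coe_countP, hl, Multiset.countP_eq_card_filter]
  rfl

end Enumeration

section Missing

variable (G : SimpleGraph V)

open Classical in
/-- The number of edges of a cyclic list that are not edges of `G`. Rotations decrease it until
it vanishes, when the list has become a Hamilton cycle. -/
noncomputable def missing (l : List V) : ℕ := (cycleEdges l).countP (· ∉ G.edgeSet)

/-- The list is the vertex sequence of a Hamilton cycle of `G` (a Hamilton cycle in the sense of
`SimpleGraph.Walk` as soon as there are three vertices). -/
structure IsHamiltonianList [Fintype V] (l : List V) : Prop where
  isEnumeration : IsEnumeration l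
  mem_edgeSet : ∀ e ∈ cycleEdges l, e ∈ G.edgeSet

variable {G}

lemma missing_eq_zero_iff {l : List V} : missing G l = 0 ↔ ∀ e ∈ cycleEdges l, e ∈ G.edgeSet := by
  classical simp [missing, Multiset.countP_eq_zero]

lemma missing_reverse_segment_lt {a b v w : V} (hab : ¬ G.Adj a b) (hav : G.Adj a v)
    (hbw : G.Adj b w) (l₁ l₂ : List V) :
    missing G (a :: v :: (l₁.reverse ++ b :: w :: l₂)) <
      missing G (a :: b :: (l₁ ++ v :: w :: l₂)) := by
  classical
  have hcount := congrArg (Multiset.countP (· ∉ G.edgeSet))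
    (cycleEdges_reverse_segment a b v w l₁ l₂)
  simp only [Multiset.countP_cons, SimpleGraph.mem_edgeSet, hav, hbw, hab, not_true_eq_false,
    not_false_eq_true, if_true, if_false] at hcount
  simp only [missing]
  omega

lemma exists_walk_of_pathEdges_mem {a b : V} {l : List V}
    (h : ∀ e ∈ pathEdges (a :: (l ++ [b])), e ∈ G.edgeSet) :
    ∃ p : G.Walk a b, p.support = a :: (l ++ [b]) ∧ p.edges = pathEdges (a :: (l ++ [b])) := by
  induction l generalizing a with
  | nil =>
    have hab : G.Adj a b := h s(a, b) (by simp)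
    exact ⟨hab.toWalk, by simp, by simp⟩
  | cons c l ih =>
    have hac : G.Adj a c := h s(a, c) (by simp)
    obtain ⟨p, hp, hpe⟩ := ih (a := c) fun e he => h e (by simp [he])
    exact ⟨.cons hac p, by simp [hp], by simp [← hpe]⟩

lemma IsHamiltonianList.exists_isHamiltonianCycle [Fintype V] [DecidableEq V] {l : List V}
    (hl : IsHamiltonianList G l) (hV : 3 ≤ Fintype.card V) :
    ∃ (x : V) (c : G.Walk x x), c.IsHamiltonianCycle ∧ ∀ e ∈ cycleEdges l, e ∈ c.edges := by
  have hlen := hl.isEnumeration.length_eq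
  obtain ⟨a, b, t, rfl⟩ : ∃ a b t, l = a :: b :: t := by
    rcases l with _ | ⟨a, _ | ⟨b, t⟩⟩ <;> simp_all <;> omega
  have hab : G.Adj a b := hl.mem_edgeSet s(a, b) (by simp [cycleEdges_cons])
  obtain ⟨p, hp, hpe⟩ := exists_walk_of_pathEdges_mem (G := G) (a := b) (b := a) (l := t)
    fun e he => hl.mem_edgeSet e (by simp [cycleEdges_cons, he])
  have hnodup := hl.isEnumeration.nodup
  have hpath : p.IsPath := by
    rw [SimpleGraph.Walk.isPath_def, hp, ← List.cons_append,
      (List.perm_append_comm (l₁ := b :: t)).nodup_iff]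
    exact hnodup
  have hplen : p.length = t.length + 1 := by simpa [hp] using p.length_support.symm
  have hcycle : (SimpleGraph.Walk.cons hab p).IsCycle := by
    refine (SimpleGraph.Walk.cons_isCycle_iff p hab).2 ⟨hpath, fun he => ?_⟩
    have := hpath.length_eq_one_of_mem_edges (Sym2.eq_swap ▸ he)
    simp only [List.length_cons] at hlen
    omega
  refine ⟨a, .cons hab p, SimpleGraph.Walk.isHamiltonianCycle_iff_isCycle_and_length_eq.2
    ⟨hcycle, ?_⟩, fun e he => ?_⟩
  · simpa [hplen] using hlen
  · rw [SimpleGraph.Walk.edges_cons, ← Multiset.mem_coe, ← Multiset.cons_coe, hpe]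
    exact he

end Missing

section Rotation

variable [Fintype V] {G : SimpleGraph V} [DecidableRel G.Adj]

lemma minDegree_le_card_adj_notMem_add_card (X : Finset V) [DecidablePred (· ∈ X)] (u : V) :
    G.minDegree ≤ #{v | G.Adj u v ∧ v ∉ X} + #X := by
  classical
  calc G.minDegree ≤ #(G.neighborFinset u) := G.minDegree_le_degree u
    _ ≤ #(({v | G.Adj u v ∧ v ∉ X} : Finset V) ∪ X) :=
      card_le_card fun v hv => by by_cases v ∈ X <;> simp_all
    _ ≤ _ := card_union_le _ _

lemma exists_adj_adj_of_not_adj {X : Finset V} (hX : 2 * #X + Fintype.card V < 2 * G.minDegree)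
    {a b : V} {l : List V} (hl : IsEnumeration (a :: b :: l)) (hab : ¬ G.Adj a b) :
    ∃ v w l₁ l₂, l = l₁ ++ v :: w :: l₂ ∧ G.Adj a v ∧ v ∉ X ∧ G.Adj b w ∧ w ∉ X := by
  classical
  let p : V → Prop := fun v => G.Adj a v ∧ v ∉ X
  let q : V → Prop := fun w => G.Adj b w ∧ w ∉ X
  have hperm : (b :: (l ++ [a])).Perm (a :: b :: l) := List.perm_append_comm (l₁ := b :: l)
  have hp : G.minDegree ≤ (b :: (l ++ [a])).countP p + #X := by
    rw [hperm.countP_eq, hl.countP_eq]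
    exact minDegree_le_card_adj_notMem_add_card X a
  have hq : G.minDegree ≤ (l ++ [a]).countP q + #X := by
    have hb : (b :: (l ++ [a])).countP q = (l ++ [a]).countP q :=
      List.countP_cons_of_neg (by simp [q])
    rw [← hb, hperm.countP_eq, hl.countP_eq]
    exact minDegree_le_card_adj_notMem_add_card X b
  have hlen : (b :: (l ++ [a])).length = Fintype.card V := hperm.length_eq.trans hl.length_eq
  obtain ⟨v, w, ⟨l₁, l₂, h⟩, ⟨hav, hvX⟩, hbw, hwX⟩ :=
    exists_infix_pair_of_length_lt p q b (l ++ [a]) (by omega)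
  obtain ⟨l₁, rfl⟩ : ∃ l₁', l₁ = b :: l₁' := by
    rcases l₁ with _ | ⟨c, l₁⟩ <;> simp_all
  obtain ⟨l₂, rfl⟩ : ∃ l₂', l₂ = l₂' ++ [a] := by
    rcases l₂.eq_nil_or_concat with rfl | ⟨l₂, c, rfl⟩
    · have hwa := (List.append_inj' (s₁ := b :: l₁ ++ [v]) (t₁ := [w]) (s₂ := b :: l)
        (t₂ := [a]) (by simpa using h) rfl).2
      simp_all [G.adj_comm]
    · have hca := (List.append_inj' (s₁ := b :: l₁ ++ v :: w :: l₂) (t₁ := [c]) (s₂ := b :: l)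
        (t₂ := [a]) (by simpa using h) rfl).2
      exact ⟨l₂, by rw [List.concat_eq_append, hca]⟩
  have h' : b :: l₁ ++ v :: w :: l₂ = b :: l :=
    List.append_cancel_right (bs := [a]) (by simpa using h)
  exact ⟨v, w, l₁, l₂, by simpa using h'.symm, hav, hvX, hbw, hwX⟩

/-- A missing edge `s(a, b)` is repaired by reversing the segment from `b` to `v`, which trades
`s(a, b)` and `s(v, w)` for `s(a, v)` and `s(b, w)`. -/
lemma IsEnumeration.exists_missing_lt {X : Finset V}
    (hX : 2 * #X + Fintype.card V < 2 * G.minDegree) {l : List V} (hl : IsEnumeration l)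
    (hmissing : missing G l ≠ 0) :
    ∃ l' v w, IsEnumeration l' ∧ missing G l' < missing G l ∧ v ∉ X ∧ w ∉ X ∧
      ∀ e ∈ cycleEdges l, e ∈ G.edgeSet → e ∈ cycleEdges l' ∨ e = s(v, w) := by
  classical
  obtain ⟨e, he, heG⟩ : ∃ e ∈ cycleEdges l, e ∉ G.edgeSet := by
    simpa [missing_eq_zero_iff] using hmissing
  have : Nonempty V := ⟨e.out.1⟩
  have hlen : 2 ≤ l.length := by
    have := G.minDegree_lt_card
    have := hl.length_eq
    omega
  obtain ⟨a, b, t, hperm, hcycle, rfl⟩ := exists_perm_cons_cons_of_mem_cycleEdges hlen he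
  obtain ⟨v, w, l₁, l₂, rfl, hav, hvX, hbw, hwX⟩ :=
    exists_adj_adj_of_not_adj hX (hl.of_perm hperm) heG
  have hswap := cycleEdges_reverse_segment a b v w l₁ l₂
  rw [hcycle] at hswap
  refine ⟨a :: v :: (l₁.reverse ++ b :: w :: l₂), v, w, hl.of_perm (.trans ?_ hperm), ?_, hvX,
    hwX, fun e he heG' => ?_⟩
  · rw [← Multiset.coe_eq_coe]
    simp only [← Multiset.cons_coe, ← Multiset.coe_add, Multiset.coe_reverse,
      ← Multiset.singleton_add]
    abel
  · rw [missing, missing, ← hcycle]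
    exact missing_reverse_segment_lt heG hav hbw l₁ l₂
  · have hmem : e ∈ s(a, b) ::ₘ s(v, w) ::ₘ
        cycleEdges (a :: v :: (l₁.reverse ++ b :: w :: l₂)) := by
      rw [hswap]
      exact Multiset.mem_cons_of_mem (Multiset.mem_cons_of_mem he)
    rcases Multiset.mem_cons.1 hmem with rfl | hmem
    · exact absurd heG' heG
    · exact (Multiset.mem_cons.1 hmem).symm

lemma IsEnumeration.exists_isHamiltonianList {X : Finset V}
    (hX : 2 * #X + Fintype.card V < 2 * G.minDegree) {l : List V} (hl : IsEnumeration l) :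
    ∃ l', IsHamiltonianList G l' ∧
      ∀ e ∈ cycleEdges l, e ∈ G.edgeSet → (∃ v ∈ e, v ∈ X) → e ∈ cycleEdges l' := by
  induction hN : missing G l using Nat.strong_induction_on generalizing l with
  | _ N ih =>
    subst hN
    by_cases hmissing : missing G l = 0
    · exact ⟨l, ⟨hl, missing_eq_zero_iff.1 hmissing⟩, fun e he _ _ => he⟩
    obtain ⟨l₁, v, w, hl₁, hlt, hv, hw, hkeep⟩ := hl.exists_missing_lt hX hmissing
    obtain ⟨l', hl', hkeep'⟩ := ih _ hlt hl₁ rfl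
    refine ⟨l', hl', fun e he heG heX => ?_⟩
    rcases hkeep e he heG with h | rfl
    · exact hkeep' e h heG heX
    · simp_all

variable [DecidableEq V]

omit [DecidableRel G.Adj] in
lemma card_filter_le_card_mem_mul_le (Q : Finset (Sym2 V)) (Δ : ℕ) :
    #{v | Δ ≤ #{e ∈ Q | v ∈ e}} * Δ ≤ 2 * #Q := by
  calc #{v | Δ ≤ #{e ∈ Q | v ∈ e}} * Δ
      ≤ ∑ v with Δ ≤ #{e ∈ Q | v ∈ e}, #{e ∈ Q | v ∈ e} :=
        card_nsmul_le_sum _ _ _ (by simp)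
    _ ≤ ∑ v, #{e ∈ Q | v ∈ e} := sum_le_univ_sum_of_nonneg fun _ => Nat.zero_le _
    _ = ∑ e ∈ Q, #{v | v ∈ e} := sum_card_bipartiteAbove_eq_sum_card_bipartiteBelow (· ∈ ·)
    _ ≤ ∑ _e ∈ Q, 2 := sum_le_sum fun e _ => by
        induction e with
        | _ a b => exact (card_le_card fun v => by simp).trans (card_le_two (a := a) (b := b))
    _ = 2 * #Q := by rw [sum_const, smul_eq_mul, mul_comm]

/-- The vertices of degree `Δ` in `Q` are protected, so that the edges sacrificed for repairs never
raise a degree beyond `Δ`; there are at most `s` of them as long as `Q` is small. -/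
lemma IsEnumeration.exists_isHamiltonianList_union {s Δ : ℕ}
    (hs : 2 * s + Fintype.card V < 2 * G.minDegree) {l : List V} (hl : IsEnumeration l)
    {Q : Finset (Sym2 V)} (hQ : ∀ v, #{e ∈ Q | v ∈ e} ≤ Δ)
    (hcard : 2 * (#Q + missing G l) < (s + 1) * Δ) :
    ∃ l' Q', IsHamiltonianList G l' ∧ Q ⊆ Q' ∧ #Q' ≤ #Q + missing G l ∧
      (∀ v, #{e ∈ Q' | v ∈ e} ≤ Δ) ∧
      ∀ e ∈ cycleEdges l, e ∈ G.edgeSet → e ∈ cycleEdges l' ∨ e ∈ Q' := by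
  induction hN : missing G l using Nat.strong_induction_on generalizing l Q with
  | _ N ih =>
    subst hN
    by_cases hmissing : missing G l = 0
    · exact ⟨l, Q, ⟨hl, missing_eq_zero_iff.1 hmissing⟩, subset_rfl, Nat.le_add_right _ _, hQ,
        fun e he _ => .inl he⟩
    let X : Finset V := {v | Δ ≤ #{e ∈ Q | v ∈ e}}
    have hX : #X ≤ s := by
      have hXQ : #X * Δ ≤ 2 * #Q := card_filter_le_card_mem_mul_le Q Δ
      have hlt : #X * Δ < (s + 1) * Δ := by omega
      exact Nat.lt_succ_iff.1 (lt_of_mul_lt_mul_right hlt (Nat.zero_le Δ))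
    obtain ⟨l₁, v, w, hl₁, hlt, hv, hw, hkeep⟩ :=
      hl.exists_missing_lt (X := X) (by omega) hmissing
    have hcard₁ : #(insert s(v, w) Q) ≤ #Q + 1 := card_insert_le _ _
    have hQ₁ (u : V) : #{e ∈ insert s(v, w) Q | u ∈ e} ≤ Δ := by
      rw [filter_insert]
      split_ifs with hu
      · have huX : u ∉ X := by rcases Sym2.mem_iff.1 hu with rfl | rfl <;> assumption
        have : #{e ∈ Q | u ∈ e} < Δ := by simpa [X] using huX
        exact (card_insert_le _ _).trans this
      · exact hQ u
    obtain ⟨l', Q', hl', hsub, hcard', hQ', hkeep'⟩ := ih _ hlt hl₁ hQ₁ (by omega) rfl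
    refine ⟨l', Q', hl', (subset_insert _ _).trans hsub, by omega, hQ', fun e he heG => ?_⟩
    rcases hkeep e he heG with h | rfl
    · exact hkeep' e h heG
    · exact .inr (hsub (mem_insert_self _ _))

lemma exists_isHamiltonianList_family {ι : Type*} [Fintype ι] {s Δ : ℕ}
    (hs : 2 * s + Fintype.card V < 2 * G.minDegree) {l : ι → List V}
    (hl : ∀ i, IsEnumeration (l i)) (hmissing : 2 * ∑ i, missing G (l i) < (s + 1) * Δ) :
    ∃ (l' : ι → List V) (Q : Finset (Sym2 V)), (∀ i, IsHamiltonianList G (l' i)) ∧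
      (∀ v, #{e ∈ Q | v ∈ e} ≤ Δ) ∧
      ∀ i, ∀ e ∈ cycleEdges (l i), e ∈ G.edgeSet → e ∈ cycleEdges (l' i) ∨ e ∈ Q := by
  classical
  have hfinset (I : Finset ι) : ∃ Q : Finset (Sym2 V), #Q ≤ ∑ i ∈ I, missing G (l i) ∧
      (∀ v, #{e ∈ Q | v ∈ e} ≤ Δ) ∧ ∀ i ∈ I, ∃ l', IsHamiltonianList G l' ∧
        ∀ e ∈ cycleEdges (l i), e ∈ G.edgeSet → e ∈ cycleEdges l' ∨ e ∈ Q := by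
    induction I using Finset.induction_on with
    | empty => exact ⟨∅, by simp⟩
    | insert i I hi ih =>
      obtain ⟨Q, hcard, hQ, hI⟩ := ih
      have hle := sum_le_univ_sum_of_nonneg (s := insert i I) fun i => Nat.zero_le (missing G (l i))
      rw [sum_insert hi] at hle ⊢
      obtain ⟨l', Q', hl', hsub, hcard', hQ', hkeep⟩ :=
        (hl i).exists_isHamiltonianList_union hs hQ (by omega)
      refine ⟨Q', by omega, hQ', fun j hj => ?_⟩
      rcases mem_insert.1 hj with rfl | hj
      · exact ⟨l', hl', hkeep⟩
      · obtain ⟨l'', hl'', hkeep''⟩ := hI j hj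
        exact ⟨l'', hl'', fun e he heG => (hkeep'' e he heG).imp_right fun h => hsub h⟩
  obtain ⟨Q, -, hQ, hfamily⟩ := hfinset univ
  choose l' hl' hkeep using fun i => hfamily i (mem_univ i)
  exact ⟨l', Q, hl', hQ, hkeep⟩

end Rotation

section LinearForest

lemma pair_isInfix_insert {a b u : V} (hau : a ≠ u) (w : V) {l₁ l₂ : List V}
    (h : [a, b] <:+: l₁ ++ u :: l₂) : [a, b] <:+: l₁ ++ u :: w :: l₂ := by
  induction l₁ with
  | nil =>
    rcases List.infix_cons_iff.1 h with h | h
    · exact absurd (List.cons_prefix_cons.1 h).1 hau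
    · exact List.infix_cons (List.infix_cons h)
  | cons c l₁ ih =>
    rcases List.infix_cons_iff.1 h with h | h
    · refine List.infix_cons_iff.2 (.inl ?_)
      rcases l₁ with _ | ⟨d, l₁⟩ <;> simpa using h
    · exact List.infix_cons (ih h)

/-- The vertices are inserted in increasing order of `f`, each right after its `R`-predecessor if it
has one. -/
lemma exists_isEnumeration_of_biUnique [Fintype V] {α : Type*} [LinearOrder α]
    {R : V → V → Prop} (hR : Relator.BiUnique R) (f : V → α) (hf : ∀ ⦃u v⦄, R u v → f u < f v) :
    ∃ l, IsEnumeration l ∧ ∀ ⦃u v⦄, R u v → s(u, v) ∈ cycleEdges l := by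
  classical
  suffices h : ∃ l : List V, (l : Multiset V) = univ.val ∧
      ∀ u ∈ univ, ∀ v ∈ univ, R u v → [u, v] <:+: l by
    obtain ⟨l, hl, hlR⟩ := h
    exact ⟨l, hl, fun u v huv => mk_mem_cycleEdges (hlR u (mem_univ u) v (mem_univ v) huv)⟩
  induction (univ : Finset V) using Finset.induction_on_max_value f with
  | empty => exact ⟨[], by simp⟩
  | insert w s hw hmax ih =>
    obtain ⟨l, hl, hlR⟩ := ih
    have hw_last (v : V) (hv : v ∈ insert w s) : ¬ R w v := fun hwv => by
      rcases mem_insert.1 hv with rfl | hv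
      · exact lt_irrefl _ (hf hwv)
      · exact (hf hwv).not_ge (hmax v hv)
    by_cases hpred : ∃ u ∈ s, R u w
    · obtain ⟨u, hu, huw⟩ := hpred
      have hul : u ∈ l := by rwa [← Multiset.mem_coe, hl]
      obtain ⟨l₁, l₂, rfl⟩ := List.append_of_mem hul
      refine ⟨l₁ ++ u :: w :: l₂, ?_, fun a ha b hb hab => ?_⟩
      · rw [insert_val_of_notMem hw, ← hl, Multiset.cons_coe, Multiset.coe_eq_coe]
        simpa using List.perm_middle (l₁ := l₁ ++ [u]) (l₂ := l₂) (a := w)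
      obtain rfl | has := mem_insert.1 ha
      · exact absurd hab (hw_last b hb)
      obtain rfl | hbs := mem_insert.1 hb
      · obtain rfl := hR.1 hab huw
        exact ⟨l₁, l₂, by simp⟩
      · refine pair_isInfix_insert ?_ w (hlR a has b hbs hab)
        rintro rfl
        exact hw (hR.2 hab huw ▸ hbs)
    · refine ⟨w :: l, by rw [insert_val_of_notMem hw, ← hl]; rfl, fun a ha b hb hab => ?_⟩
      obtain rfl | has := mem_insert.1 ha
      · exact absurd hab (hw_last b hb)
      obtain rfl | hbs := mem_insert.1 hb
      · exact absurd ⟨a, has, hab⟩ hpred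
      · exact List.infix_cons (hlR a has b hbs hab)

end LinearForest

section EdgeColoring

open Equiv (Perm)

lemma exists_perm_forall_ne_zero {n : Type*} [Fintype n] {D : ℕ} (hD : D ≠ 0) {M : n → n → ℕ}
    (hrow : ∀ i, ∑ j, M i j = D) (hcol : ∀ j, ∑ i, M i j = D) :
    ∃ σ : Perm n, ∀ i, M i (σ i) ≠ 0 := by
  classical
  let support (i : n) : Finset n := {j | M i j ≠ 0}
  have hall (s : Finset n) : #s ≤ #(s.biUnion support) := by
    refine le_of_mul_le_mul_right ?_ (Nat.pos_of_ne_zero hD)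
    calc #s * D = ∑ i ∈ s, ∑ j, M i j := by simp [hrow]
      _ = ∑ i ∈ s, ∑ j ∈ s.biUnion support, M i j := sum_congr rfl fun i hi =>
          (sum_subset (subset_univ _) fun j _ hj => by
            by_contra hij
            exact hj (mem_biUnion.2 ⟨i, hi, by simpa [support] using hij⟩)).symm
      _ = ∑ j ∈ s.biUnion support, ∑ i ∈ s, M i j := sum_comm
      _ ≤ ∑ j ∈ s.biUnion support, ∑ i, M i j :=
          sum_le_sum fun j _ => sum_le_univ_sum_of_nonneg fun _ => Nat.zero_le _
      _ = #(s.biUnion support) * D := by simp [hcol]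
  obtain ⟨f, hf, hfM⟩ := (all_card_le_biUnion_card_iff_exists_injective support).1 hall
  exact ⟨.ofBijective f (Finite.injective_iff_bijective.1 hf), fun i => by
    simpa [support] using hfM i⟩

lemma exists_perms_of_sum_eq {n : Type*} [Fintype n] [DecidableEq n] {D : ℕ} {M : n → n → ℕ}
    (hrow : ∀ i, ∑ j, M i j = D) (hcol : ∀ j, ∑ i, M i j = D) :
    ∃ σ : Fin D → Perm n, ∀ i j, M i j = #{t | σ t i = j} := by
  induction D generalizing M with
  | zero =>
    refine ⟨Fin.elim0, fun i j => ?_⟩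
    have := sum_eq_zero_iff.1 (hrow i) j (mem_univ j)
    simpa using this
  | succ D ih =>
    obtain ⟨σ, hσ⟩ := exists_perm_forall_ne_zero D.succ_ne_zero hrow hcol
    let M' (i j : n) : ℕ := M i j - if σ i = j then 1 else 0
    have hM (i j : n) : M i j = M' i j + if σ i = j then 1 else 0 := by
      have := hσ i
      simp only [M']
      split_ifs with h
      · subst h; omega
      · rfl
    obtain ⟨τ, hτ⟩ := ih (M := M')
      (fun i => by simpa [hM, sum_add_distrib] using hrow i)
      (fun j => by simpa [hM, sum_add_distrib, ← σ.eq_symm_apply] using hcol j)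
    refine ⟨Fin.cons σ τ, fun i j => ?_⟩
    rw [Fin.card_filter_univ_succ, hM, hτ, add_comm]
    simp only [Fin.cons_zero, Fin.cons_succ]
    split_ifs <;> ring

/-- The rows and columns of `A` are filled up to `D` on the diagonal of the block matrix with
off-diagonal blocks `A` and its transpose. -/
lemma exists_sum_eq_extending {α β : Type*} [Fintype α] [Fintype β] {D : ℕ} {A : α → β → Prop}
    (hrow : ∀ a, {b | A a b}.ncard ≤ D) (hcol : ∀ b, {a | A a b}.ncard ≤ D) :
    ∃ M : α ⊕ β → α ⊕ β → ℕ, (∀ i, ∑ j, M i j = D) ∧ (∀ j, ∑ i, M i j = D) ∧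
      ∀ a b, A a b ↔ M (.inl a) (.inr b) ≠ 0 := by
  classical
  let M : α ⊕ β → α ⊕ β → ℕ
    | .inl a, .inl a' => if a = a' then D - {b | A a b}.ncard else 0
    | .inl a, .inr b => if A a b then 1 else 0
    | .inr b, .inl a => if A a b then 1 else 0
    | .inr b, .inr b' => if b = b' then D - {a | A a b}.ncard else 0
  have hrow' (a : α) : ∑ b, (if A a b then 1 else 0) = {b | A a b}.ncard := by
    simp [Set.ncard_eq_toFinset_card']
  have hcol' (b : β) : ∑ a, (if A a b then 1 else 0) = {a | A a b}.ncard := by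
    simp [Set.ncard_eq_toFinset_card']
  refine ⟨M, ?_, ?_, fun a b => by simp [M]⟩ <;> rintro (a | b) <;>
    simp [M, hrow', hcol', -sum_boole, hrow, hcol]

/-- König's edge colouring theorem, stated for the bipartite graph of a relation. -/
lemma exists_biUnique_cover {α β : Type*} [Finite α] [Finite β] {D : ℕ} {A : α → β → Prop}
    (hrow : ∀ a, {b | A a b}.ncard ≤ D) (hcol : ∀ b, {a | A a b}.ncard ≤ D) :
    ∃ R : Fin D → α → β → Prop, (∀ t, Relator.BiUnique (R t)) ∧
      ∀ a b, A a b ↔ ∃ t, R t a b := by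
  classical
  have := Fintype.ofFinite α
  have := Fintype.ofFinite β
  obtain ⟨M, hMrow, hMcol, hM⟩ := exists_sum_eq_extending hrow hcol
  obtain ⟨σ, hσ⟩ := exists_perms_of_sum_eq hMrow hMcol
  refine ⟨fun t a b => σ t (.inl a) = .inr b, fun t => ⟨?_, ?_⟩, fun a b => ?_⟩
  · intro a b c hac hbc
    simpa using hac.trans hbc.symm
  · intro a b c hab hac
    simpa using hab.symm.trans hac
  · simp [hM, hσ, Finset.filter_eq_empty_iff]

end EdgeColoring

section Zigzag

/-- Walecki's zigzag path through `ZMod n` starting at `p`: it visits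
`p, p + 1, p - 1, p + 2, p - 2, …`, and `zigzagPos p i` is the position at which it visits `i`. -/
def zigzagPos {n : ℕ} (p i : ZMod n) : ℤ :=
  if 0 < (i - p).valMinAbs then 2 * (i - p).valMinAbs - 1 else -2 * (i - p).valMinAbs

lemma zigzagPos_injective {n : ℕ} (p : ZMod n) : Function.Injective (zigzagPos p) := by
  intro i j h
  have hval : (i - p).valMinAbs = (j - p).valMinAbs := by
    simp only [zigzagPos] at h
    split_ifs at h <;> omega
  exact sub_left_injective (ZMod.injective_valMinAbs hval)

/-- Labels are consecutive on the zigzag path starting at `p` exactly when their sum is `2 * p` or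
`2 * p + 1`. -/
lemma exists_zigzagPos_consecutive {m : ℕ} [NeZero m] {i j : ZMod (2 * m)} (hij : i ≠ j) :
    ∃ p : Fin m, zigzagPos ((p : ℕ) : ZMod (2 * m)) i + 1 = zigzagPos ((p : ℕ) : ZMod (2 * m)) j ∨
      zigzagPos ((p : ℕ) : ZMod (2 * m)) j + 1 = zigzagPos ((p : ℕ) : ZMod (2 * m)) i := by
  have hlt : (i + j).val / 2 < m := by
    have := (i + j).val_lt
    omega
  refine ⟨⟨(i + j).val / 2, hlt⟩, ?_⟩
  set p : ZMod (2 * m) := (((i + j).val / 2 : ℕ) : ZMod (2 * m))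
  set x := (i - p).valMinAbs with hx
  set r := (i + j).val % 2
  have hxp : (x : ZMod (2 * m)) = i - p := ZMod.coe_valMinAbs _
  have hsum : i + j = 2 * p + (r : ℕ) := by
    simpa only [Nat.cast_add, Nat.cast_mul, Nat.cast_two, ZMod.natCast_zmod_val] using
      (congrArg (Nat.cast (R := ZMod (2 * m))) (Nat.div_add_mod (i + j).val 2)).symm
  have hjp : j - p = ((r - x : ℤ) : ZMod (2 * m)) := by
    push_cast
    linear_combination hsum + hxp
  have hne : x ≠ (j - p).valMinAbs := fun h =>
    hij (sub_left_injective (ZMod.injective_valMinAbs (hx.symm.trans h)))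
  have hneg : r = 0 → x ≠ m := fun hr0 hxm => hne (congrArg ZMod.valMinAbs (by
    have h2m : ((2 * m : ℕ) : ZMod (2 * m)) = 0 := ZMod.natCast_self _
    rw [hjp, ← hxp, hr0, hxm]
    push_cast at h2m ⊢
    linear_combination h2m))
  have hval : (j - p).valMinAbs = r - x := by
    refine (ZMod.valMinAbs_spec _ _).2 ⟨hjp, ?_⟩
    have := (i - p).valMinAbs_mem_Ioc
    rw [← hx, Set.mem_Ioc] at this
    rw [Set.mem_Ioc]
    push_cast at this ⊢
    omega
  rw [hval] at hne
  simp only [zigzagPos, hval, ← hx]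
  split_ifs <;> omega

end Zigzag

section Labelling

open MeasureTheory ProbabilityTheory

variable {κ : Type*} [Fintype κ] [Nonempty κ] [DecidableEq κ]

lemma measureReal_pi_uniformOn_le_exp [Fintype V] [MeasurableSpace κ] [MeasurableSingletonClass κ]
    (N : Finset V) (j : κ) {ε : ℝ} (hε : 0 ≤ ε) :
    (Measure.pi fun _ : V => uniformOn (Set.univ : Set κ)).real
        {c | (#N : ℝ) / Fintype.card κ + ε ≤ #{u ∈ N | c u = j}} ≤
      Real.exp (-2 * ε ^ 2 / #N) := by
  set μ : Measure (V → κ) := Measure.pi fun _ => uniformOn Set.univ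
  let X (i : κ) : ℝ := if i = j then 1 else 0
  have hX : Measurable X := measurable_of_finite X
  have hmean : ∫ i, X i ∂uniformOn Set.univ = 1 / Fintype.card κ := by
    simp [X, integral_fintype, measureReal_def, uniformOn_univ]
  have hsubgaussian (u : V) : HasSubgaussianMGF
      (fun c : V → κ => X (c u) - 1 / Fintype.card κ) ((‖(1 : ℝ) - 0‖₊ / 2) ^ 2) μ := by
    have heval := measurePreserving_eval (fun _ : V => uniformOn (Set.univ : Set κ)) u
    refine HasSubgaussianMGF.of_map (X := fun i => X i - 1 / Fintype.card κ) heval.aemeasurable ?_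
    rw [heval.map_eq, ← hmean]
    exact hasSubgaussianMGF_of_mem_Icc hX.aemeasurable
      (.of_forall fun i => by simp only [X]; split_ifs <;> simp)
  have hindep : iIndepFun (fun u (c : V → κ) => X (c u) - 1 / Fintype.card κ) μ :=
    iIndepFun_pi (X := fun _ i => X i - 1 / Fintype.card κ) fun _ =>
      (measurable_of_finite _).aemeasurable
  have hoeffding := HasSubgaussianMGF.measure_sum_ge_le_of_iIndepFun hindep (s := N)
    (fun u _ => hsubgaussian u) hε
  convert hoeffding using 2
  · ext c
    simp [X, div_eq_mul_inv, le_sub_iff_add_le, add_comm]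
  · have hsum : ((∑ _u ∈ N, (‖(1 : ℝ) - 0‖₊ / 2) ^ 2 : NNReal) : ℝ) = #N / 4 := by
      norm_num [div_eq_mul_inv]
    rw [hsum]
    ring

lemma exists_forall_card_filter_lt [Fintype V] {ι : Type*} [Fintype ι] (N : ι → Finset V) {ε : ℝ}
    (hε : 0 < ε)
    (hsmall : Fintype.card ι * Fintype.card κ * Real.exp (-2 * ε ^ 2 / Fintype.card V) < 1) :
    ∃ c : V → κ, ∀ i j, (#{u ∈ N i | c u = j} : ℝ) < (#(N i) : ℝ) / Fintype.card κ + ε := by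
  let _ : MeasurableSpace κ := ⊤
  let μ : Measure (V → κ) := Measure.pi fun _ => uniformOn Set.univ
  let bad (p : ι × κ) : Set (V → κ) :=
    {c | (#(N p.1) : ℝ) / Fintype.card κ + ε ≤ #{u ∈ N p.1 | c u = p.2}}
  have hbad (p : ι × κ) : μ.real (bad p) ≤ Real.exp (-2 * ε ^ 2 / Fintype.card V) := by
    rcases (N p.1).eq_empty_or_nonempty with hN | hN
    · have : bad p = ∅ := by simp [bad, hN, hε.not_ge]
      rw [this, measureReal_empty]
      positivity
    · refine (measureReal_pi_uniformOn_le_exp (N p.1) p.2 hε.le).trans (Real.exp_le_exp.2 ?_)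
      have hle : (#(N p.1) : ℝ) ≤ Fintype.card V := mod_cast card_le_univ _
      have : (0 : ℝ) < #(N p.1) := mod_cast hN.card_pos
      simp only [neg_mul, neg_div, neg_le_neg_iff]
      gcongr
  by_contra! hcon
  have hcover : ⋃ p ∈ (univ : Finset (ι × κ)), bad p = Set.univ := by
    ext c
    simpa [bad] using hcon c
  have hprob := measureReal_biUnion_finset_le (μ := μ) univ bad
  rw [hcover, probReal_univ] at hprob
  have hsum := sum_le_card_nsmul univ _ _ fun p _ => hbad p
  rw [card_univ, Fintype.card_prod, nsmul_eq_mul, Nat.cast_mul] at hsum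
  linarith

lemma exists_balanced_labelling {γ : ℝ} (hγ : 0 < γ) :
    ∃ n₀ : ℕ, ∀ (V : Type*) [Fintype V] (N : V → Finset V), n₀ ≤ Fintype.card V →
      ∃ c : V → κ, ∀ v j, (#{u ∈ N v | c u = j} : ℝ) ≤
        (#(N v) : ℝ) / Fintype.card κ + γ * Fintype.card V := by
  have hlim : Filter.Tendsto (fun n : ℕ => n * Fintype.card κ * Real.exp (-2 * γ ^ 2 * n))
      Filter.atTop (nhds 0) := by
    have hexp := (tendsto_rpow_mul_exp_neg_mul_atTop_nhds_zero 1 (2 * γ ^ 2) (by positivity)).comp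
      tendsto_natCast_atTop_atTop
    convert hexp.const_mul (Fintype.card κ : ℝ) using 2 with n
    · simp only [Function.comp_apply, Real.rpow_one]
      ring_nf
    · rw [mul_zero]
  obtain ⟨n₀, hn₀⟩ := Filter.eventually_atTop.1 (hlim.eventually_lt_const one_pos)
  refine ⟨n₀ + 1, fun V _ N hn => ?_⟩
  have hpos : (0 : ℝ) < Fintype.card V := by norm_cast; omega
  obtain ⟨c, hc⟩ := exists_forall_card_filter_lt (κ := κ) N (ε := γ * Fintype.card V)
    (by positivity) (by
      have hexp : -2 * (γ * Fintype.card V) ^ 2 / Fintype.card V = -2 * γ ^ 2 * Fintype.card V := by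
        field_simp
      rw [hexp]
      exact hn₀ (Fintype.card V) (by omega))
  exact ⟨c, fun v j => (hc v j).le⟩

omit [DecidableEq κ] in
lemma exists_labelling_ncard_adj_le {η : ℝ} (hη : 0 < η) :
    ∃ n₀ : ℕ, ∀ (V : Type*) [Fintype V] (G : SimpleGraph V) [DecidableRel G.Adj],
      n₀ ≤ Fintype.card V → ∃ c : V → κ, ∀ v j, ({u | G.Adj v u ∧ c u = j}.ncard : ℝ) ≤
        (G.maxDegree + η * Fintype.card V) / Fintype.card κ := by
  classical
  obtain ⟨n₀, hn₀⟩ := exists_balanced_labelling (κ := κ) (γ := η / Fintype.card κ) (by positivity)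
  refine ⟨n₀, fun V _ G _ hn => ?_⟩
  obtain ⟨c, hc⟩ := hn₀ V (fun v => G.neighborFinset v) hn
  refine ⟨c, fun v j => ?_⟩
  calc ({u | G.Adj v u ∧ c u = j}.ncard : ℝ) = #{u ∈ G.neighborFinset v | c u = j} := by
        rw [← Set.ncard_coe_finset]
        simp
    _ ≤ G.degree v / Fintype.card κ + η / Fintype.card κ * Fintype.card V := hc v j
    _ ≤ G.maxDegree / Fintype.card κ + η / Fintype.card κ * Fintype.card V := by
        gcongr
        exact G.degree_le_maxDegree v
    _ = _ := by ring

end Labelling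

section Cover

variable {G : SimpleGraph V}

/-- The edges of `G` joining different classes of the labelling `c`. -/
abbrev crossing (G : SimpleGraph V) {κ : Type*} (c : V → κ) : SimpleGraph V :=
  G ⊓ (⊤ : SimpleGraph κ).comap c

lemma ncard_neighborSet_deleteEdges_le_of_labelling [Finite V] [DecidableEq V] {κ : Type*}
    (c : V → κ) {D Δ : ℕ} (hc : ∀ v j, {u | G.Adj v u ∧ c u = j}.ncard ≤ D) {Q : Finset (Sym2 V)}
    (hQ : ∀ v, #{e ∈ Q | v ∈ e} ≤ Δ) {S : Set (Sym2 V)}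
    (hS : ∀ e ∈ (crossing G c).edgeSet, e ∈ S ∨ e ∈ Q) (v : V) :
    ((G.deleteEdges S).neighborSet v).ncard ≤ D + Δ := by
  have hsub : (G.deleteEdges S).neighborSet v ⊆
      {u | G.Adj v u ∧ c u = c v} ∪ {u | s(v, u) ∈ Q} := fun u hu => by
    obtain ⟨huv, huS⟩ : G.Adj v u ∧ s(v, u) ∉ S := by simpa using hu
    by_cases h : c u = c v
    · exact .inl ⟨huv, h⟩
    · exact .inr ((hS s(v, u) ⟨huv, Ne.symm h⟩).resolve_left huS)
  have hQv : {u | s(v, u) ∈ Q}.ncard ≤ Δ := by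
    refine le_trans ?_ (hQ v)
    rw [← Set.ncard_coe_finset]
    exact Set.ncard_le_ncard_of_injOn (fun u => s(v, u)) (fun u hu => by simpa using hu)
      fun a _ b _ h => Sym2.congr_right.1 h
  exact ((Set.ncard_le_ncard hsub).trans (Set.ncard_union_le _ _)).trans
    (Nat.add_le_add (hc v _) hQv)

variable [Fintype V]

lemma card_mul_minDegree_add_two_mul_sum_missing_le {ι : Type*} [Fintype ι] {l : ι → List V}
    (hl : ∀ i, IsEnumeration (l i)) {H : SimpleGraph V} [DecidableRel H.Adj] (hHG : H ≤ G)
    (hcover : ∀ e ∈ H.edgeSet, ∃ i, e ∈ cycleEdges (l i)) :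
    Fintype.card V * H.minDegree + 2 * ∑ i, missing G (l i) ≤
      2 * (Fintype.card V * Fintype.card ι) := by
  classical
  have hedges : Fintype.card V * H.minDegree ≤ 2 * #H.edgeFinset := by
    rw [← H.sum_degrees_eq_twice_card_edges, ← smul_eq_mul, ← card_univ]
    exact card_nsmul_le_sum _ _ _ fun v _ => H.minDegree_le_degree v
  have hpresent : #H.edgeFinset ≤ ∑ i, (cycleEdges (l i)).countP (· ∈ G.edgeSet) := by
    simp only [Multiset.countP_eq_card_filter, ← Multiset.card_sum]
    refine Multiset.card_le_card ((Multiset.le_iff_subset H.edgeFinset.nodup).2 fun e he => ?_)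
    have heH : e ∈ H.edgeSet := SimpleGraph.mem_edgeFinset.1 he
    obtain ⟨i, hi⟩ := hcover e heH
    exact Multiset.mem_sum.2 ⟨i, mem_univ i,
      Multiset.mem_filter.2 ⟨hi, SimpleGraph.edgeSet_mono hHG heH⟩⟩
  have htotal : ∑ i, (cycleEdges (l i)).countP (· ∈ G.edgeSet) + ∑ i, missing G (l i) =
      Fintype.card V * Fintype.card ι := by
    rw [← sum_add_distrib, mul_comm, ← smul_eq_mul, ← card_univ, ← sum_const]
    refine sum_congr rfl fun i _ => ?_
    rw [missing, ← (hl i).length_eq, ← card_cycleEdges]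
    exact (Multiset.card_eq_countP_add_countP _ _).symm
  omega

lemma exists_isEnumeration_cover_crossing {m D : ℕ} [NeZero m] (c : V → ZMod (2 * m))
    (hc : ∀ v j, {u | G.Adj v u ∧ c u = j}.ncard ≤ D) :
    ∃ l : Fin m × Fin D → List V, (∀ i, IsEnumeration (l i)) ∧
      ∀ e ∈ (crossing G c).edgeSet, ∃ i, e ∈ cycleEdges (l i) := by
  let pos (p : Fin m) (v : V) : ℤ := zigzagPos ((p : ℕ) : ZMod (2 * m)) (c v)
  have hfibre (p : Fin m) (v : V) (z : ℤ) : {u | G.Adj v u ∧ pos p u = z}.ncard ≤ D := by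
    rcases {u | G.Adj v u ∧ pos p u = z}.eq_empty_or_nonempty with h | ⟨w, -, hw⟩
    · simp [h]
    · refine (Set.ncard_le_ncard fun u hu => ?_).trans (hc v (c w))
      exact ⟨hu.1, zigzagPos_injective _ (hu.2.trans hw.symm)⟩
  have hforest (p : Fin m) : ∃ l : Fin D → List V, (∀ t, IsEnumeration (l t)) ∧
      ∀ u v, G.Adj u v → pos p u + 1 = pos p v → ∃ t, s(u, v) ∈ cycleEdges (l t) := by
    have hpred (v : V) : {u | G.Adj u v ∧ pos p v = pos p u + 1}.ncard ≤ D := by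
      simpa only [G.adj_comm v, eq_comm (b := pos p v - 1), sub_eq_iff_eq_add] using
        hfibre p v (pos p v - 1)
    obtain ⟨R, hR, hRiff⟩ := exists_biUnique_cover (fun u => hfibre p u (pos p u + 1)) hpred
    choose l hl hlR using fun t =>
      exists_isEnumeration_of_biUnique (hR t) (pos p) fun u v huv => by
        have := ((hRiff u v).2 ⟨t, huv⟩).2
        omega
    refine ⟨l, hl, fun u v huv hpos => ?_⟩
    obtain ⟨t, ht⟩ := (hRiff u v).1 ⟨huv, hpos.symm⟩
    exact ⟨t, hlR t ht⟩
  choose l hl hcover using hforest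
  refine ⟨fun i => l i.1 i.2, fun i => hl i.1 i.2, fun e he => ?_⟩
  induction e with
  | _ u v =>
    obtain ⟨huv, hne⟩ : G.Adj u v ∧ c u ≠ c v := by simpa using he
    obtain ⟨p, hp | hp⟩ := exists_zigzagPos_consecutive hne
    · obtain ⟨t, ht⟩ := hcover p u v huv hp
      exact ⟨(p, t), ht⟩
    · obtain ⟨t, ht⟩ := hcover p v u huv.symm hp
      exact ⟨(p, t), Sym2.eq_swap ▸ ht⟩

variable [DecidableRel G.Adj]

lemma minDegree_le_minDegree_crossing_add {κ : Type*} (c : V → κ) {D : ℕ}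
    [DecidableRel (crossing G c).Adj] [Nonempty V]
    (hc : ∀ v j, {u | G.Adj v u ∧ c u = j}.ncard ≤ D) :
    G.minDegree ≤ (crossing G c).minDegree + D := by
  classical
  refine Nat.sub_le_iff_le_add.1 (SimpleGraph.le_minDegree_of_forall_le_degree _ _ fun v => ?_)
  refine Nat.sub_le_iff_le_add.2 ((G.minDegree_le_degree v).trans ?_)
  have hsub : G.neighborFinset v ⊆ (crossing G c).neighborFinset v ∪
      ({u | G.Adj v u ∧ c u = c v} : Finset V) := fun u hu => by
    by_cases h : c u = c v <;> simp_all [eq_comm]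
  refine ((card_le_card hsub).trans (card_union_le _ _)).trans ?_
  refine Nat.add_le_add_left ?_ _
  simpa [Set.ncard_eq_toFinset_card'] using hc v (c v)

lemma exists_isHamiltonianList_cover_of_labelling {m D Δ s : ℕ} [NeZero m]
    (hs : 2 * s + Fintype.card V < 2 * G.minDegree) (c : V → ZMod (2 * m))
    (hc : ∀ v j, {u | G.Adj v u ∧ c u = j}.ncard ≤ D)
    (hcard : Fintype.card V * ((2 * m + 1) * D) < Fintype.card V * G.minDegree + (s + 1) * Δ) :
    ∃ l : Fin m × Fin D → List V, (∀ i, IsHamiltonianList G (l i)) ∧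
      ∀ v, ((G.deleteEdges {e | ∃ i, e ∈ cycleEdges (l i)}).neighborSet v).ncard ≤ D + Δ := by
  classical
  obtain ⟨l, hl, hcover⟩ := exists_isEnumeration_cover_crossing c hc
  have hmissing : 2 * ∑ i, missing G (l i) < (s + 1) * Δ := by
    have hcount := card_mul_minDegree_add_two_mul_sum_missing_le (G := G) hl inf_le_left hcover
    rcases isEmpty_or_nonempty V with hV | hV
    · simp_all
    have hdegree := Nat.mul_le_mul_left (Fintype.card V) (minDegree_le_minDegree_crossing_add c hc)
    simp only [Fintype.card_prod, Fintype.card_fin] at hcount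
    linarith
  obtain ⟨l', Q, hl', hQ, hkeep⟩ := exists_isHamiltonianList_family hs hl hmissing
  refine ⟨l', hl', ncard_neighborSet_deleteEdges_le_of_labelling c hc hQ fun e he => ?_⟩
  obtain ⟨i, hi⟩ := hcover e he
  exact (hkeep i e hi (SimpleGraph.edgeSet_mono inf_le_left he)).imp_left fun h => ⟨i, h⟩

/-- An edge is protected through its end that comes first in a fixed ordering of `V`, which is cut
into `q` blocks of at most `s` vertices. -/
lemma exists_isHamiltonianList_cover_of_ncard_neighborSet_le {F : SimpleGraph V} {K q s : ℕ}
    (hs : 2 * s + Fintype.card V < 2 * G.minDegree) (hq : Fintype.card V ≤ q * s) (hFG : F ≤ G)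
    (hF : ∀ v, (F.neighborSet v).ncard ≤ K) :
    ∃ l : Fin K × Fin q → List V, (∀ i, IsHamiltonianList G (l i)) ∧
      ∀ e ∈ F.edgeSet, ∃ i, e ∈ cycleEdges (l i) := by
  classical
  let x := Fintype.equivFin V
  obtain ⟨R, hR, hRiff⟩ := exists_biUnique_cover (D := K) (A := fun u v => F.Adj u v ∧ x u < x v)
    (fun u => (Set.ncard_le_ncard fun v hv => hv.1).trans (hF u))
    (fun v => (Set.ncard_le_ncard fun u hu => hu.1.symm).trans (hF v))
  choose l₀ hl₀ hl₀R using fun t => exists_isEnumeration_of_biUnique (hR t) x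
    fun u v huv => ((hRiff u v).2 ⟨t, huv⟩).2
  let X (i : ℕ) : Finset V := {v | (x v : ℕ) ∈ Ico (s * i) (s * (i + 1))}
  have hX (i : ℕ) : #(X i) ≤ s := by
    refine (card_le_card_of_injOn (fun v => (x v : ℕ)) (t := Ico (s * i) (s * (i + 1)))
      (fun v hv => by simpa [X] using hv) (Fin.val_injective.comp x.injective).injOn).trans_eq ?_
    rw [Nat.card_Ico, Nat.mul_succ, Nat.add_sub_cancel_left]
  choose l hl hkeep using fun i : Fin K × Fin q =>
    (hl₀ i.1).exists_isHamiltonianList (G := G) (X := X i.2) (by have := hX i.2; omega)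
  have hcover (u v : V) (huv : F.Adj u v) (hlt : x u < x v) : ∃ i, s(u, v) ∈ cycleEdges (l i) := by
    obtain ⟨t, ht⟩ := (hRiff u v).1 ⟨huv, hlt⟩
    have hxu : (x u : ℕ) < s * q := (x u).isLt.trans_le (hq.trans_eq (mul_comm q s))
    have huX : u ∈ X ((x u : ℕ) / s) := by
      have hs : 0 < s := Nat.pos_of_mul_pos_right (Nat.zero_lt_of_lt hxu)
      simpa [X] using ⟨Nat.mul_div_le _ s, Nat.lt_mul_div_succ _ hs⟩
    exact ⟨(t, ⟨_, Nat.div_lt_of_lt_mul hxu⟩),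
      hkeep (t, ⟨_, _⟩) _ (hl₀R t ht) (hFG huv) ⟨u, by simp, huX⟩⟩
  refine ⟨l, hl, fun e he => ?_⟩
  induction e with
  | _ u v =>
    rcases lt_or_gt_of_ne (x.injective.ne he.ne) with h | h
    · exact hcover u v he h
    · exact Sym2.eq_swap ▸ hcover v u he.symm h

variable [DecidableEq V]

omit [DecidableRel G.Adj] in
lemma exists_isHamiltonianCycle_family {ι : Type*} [Fintype ι] {k : ℕ}
    (hk : Fintype.card ι = k) (hV : 3 ≤ Fintype.card V) {l : ι → List V}
    (hl : ∀ i, IsHamiltonianList G (l i)) :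
    ∃ (x : Fin k → V) (c : ∀ j, G.Walk (x j) (x j)),
      (∀ j, (c j).IsHamiltonianCycle) ∧ ∀ i, ∀ e ∈ cycleEdges (l i), ∃ j, e ∈ (c j).edges := by
  choose x c hc hcover using fun j =>
    (hl ((Fintype.equivFinOfCardEq hk).symm j)).exists_isHamiltonianCycle hV
  exact ⟨x, c, hc, fun i e he => ⟨Fintype.equivFinOfCardEq hk i, hcover _ e (by simpa using he)⟩⟩

lemma exists_hamiltonian_cover_of_labelling {m D Δ q s : ℕ} [NeZero m] (hV : 3 ≤ Fintype.card V)
    (hs : 2 * s + Fintype.card V < 2 * G.minDegree) (hq : Fintype.card V ≤ q * s)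
    (c : V → ZMod (2 * m)) (hc : ∀ v j, {u | G.Adj v u ∧ c u = j}.ncard ≤ D)
    (hcard : Fintype.card V * ((2 * m + 1) * D) < Fintype.card V * G.minDegree + (s + 1) * Δ) :
    ∃ (x : Fin (m * D + (D + Δ) * q) → V) (w : ∀ j, G.Walk (x j) (x j)),
      (∀ j, (w j).IsHamiltonianCycle) ∧ ∀ e ∈ G.edgeSet, ∃ j, e ∈ (w j).edges := by
  obtain ⟨l, hl, hleft⟩ := exists_isHamiltonianList_cover_of_labelling hs c hc hcard
  obtain ⟨l', hl', hcover'⟩ :=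
    exists_isHamiltonianList_cover_of_ncard_neighborSet_le hs hq (G.deleteEdges_le _) hleft
  obtain ⟨x, w, hw, hcover⟩ := exists_isHamiltonianCycle_family (l := Sum.elim l l')
    (k := m * D + (D + Δ) * q) (by simp) hV (Sum.rec hl hl')
  refine ⟨x, w, hw, fun e he => ?_⟩
  by_cases h : ∃ i, e ∈ cycleEdges (l i)
  · exact hcover (.inl h.choose) e h.choose_spec
  · obtain ⟨i, hi⟩ := hcover' e (by simp_all [SimpleGraph.edgeSet_deleteEdges])
    exact hcover (.inr i) e hi

end Cover

section Parameters

lemma two_mul_div_add_one_add_lt_two_mul {ξ : ℝ} {n q δ : ℕ} (hqpos : 0 < q) (hq : 4 < ξ * q)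
    (hqn : 5 * q ≤ ξ * n) (hδ : (1 / 2 + ξ) * n ≤ δ) : 2 * (n / q + 1) + n < 2 * δ := by
  have hq_one : (1 : ℝ) ≤ q := mod_cast hqpos
  have hdiv : ((n / q : ℕ) : ℝ) ≤ ξ / 4 * n := by
    refine Nat.cast_div_le.trans ((div_le_iff₀ (by positivity)).2 ?_)
    have := mul_le_mul_of_nonneg_right hq.le n.cast_nonneg
    linarith
  have hlt : 2 * (((n / q : ℕ) : ℝ) + 1) + n < 2 * δ := by linarith
  exact_mod_cast hlt

lemma mul_lt_mul_add_of_balanced {η N d δ m D Δ q s : ℝ} (hη : 0 < η) (hN : 0 < N) (hs : 0 ≤ s)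
    (hq : 0 ≤ q) (hmD : 2 * m * D ≤ d + η * N) (hD : D ≤ η * N) (hd : d ≤ δ + η * N)
    (hqs : N ≤ q * s) (hΔ : 4 * η * q * N ≤ Δ) :
    N * ((2 * m + 1) * D) < N * δ + (s + 1) * Δ := by
  have hleft : N * ((2 * m + 1) * D) ≤ N * (δ + 3 * η * N) :=
    mul_le_mul_of_nonneg_left (by linarith) hN.le
  have hright : 4 * η * N * N ≤ s * Δ :=
    calc 4 * η * N * N ≤ 4 * η * N * (q * s) := by gcongr
      _ = s * (4 * η * q * N) := by ring
      _ ≤ s * Δ := by gcongr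
  have hΔ' : 0 ≤ Δ := le_trans (by positivity) hΔ
  have hgap : 0 < η * N * N := by positivity
  linarith

lemma mul_add_add_mul_le_of_balanced {ξ η N d m D Δ q : ℝ} (hη : 0 < η) (hN : 0 < N) (hq : 1 ≤ q)
    (hηq : η * q ^ 2 = ξ / 20) (hmD : 2 * m * D ≤ d + η * N) (hD : D ≤ η * N)
    (hΔ : Δ ≤ 4 * η * q * N + 1) (hqN : 5 * q ≤ ξ * N) :
    m * D + (D + Δ) * q ≤ (d + ξ * N) / 2 := by
  have hleft : (D + Δ) * q ≤ (η * N + (4 * η * q * N + 1)) * q := by gcongr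
  have hηqN : η * q ^ 2 * N = ξ / 20 * N := by rw [hηq]
  have hηN : η * N ≤ η * N * q := le_mul_of_one_le_right (by positivity) hq
  have hηN' : η * N * q ≤ η * N * q * q := le_mul_of_one_le_right (by positivity) hq
  linarith

end Parameters

lemma exists_hamiltonian_cover_of_balanced [Fintype V] [DecidableEq V] {G : SimpleGraph V}
    [DecidableRel G.Adj] {ξ η : ℝ} {q m : ℕ} [NeZero m] (hη : 0 < η) (hq : 4 < ξ * q)
    (hηq : η * q ^ 2 = ξ / 20) (hm : 1 + η ≤ 2 * m * η) (hV : 3 ≤ Fintype.card V)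
    (hqV : 5 * q ≤ ξ * Fintype.card V) (hmin : (1 / 2 + ξ) * Fintype.card V ≤ G.minDegree)
    (hmax : G.maxDegree ≤ G.minDegree + η * Fintype.card V) (c : V → ZMod (2 * m))
    (hc : ∀ v j, ({u | G.Adj v u ∧ c u = j}.ncard : ℝ) ≤
      (G.maxDegree + η * Fintype.card V) / (2 * m)) :
    ∃ (k : ℕ) (x : Fin k → V) (w : ∀ j, G.Walk (x j) (x j)),
      (k : ℝ) ≤ (G.maxDegree + ξ * Fintype.card V) / 2 ∧
      (∀ j, (w j).IsHamiltonianCycle) ∧ ∀ e ∈ G.edgeSet, ∃ j, e ∈ (w j).edges := by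
  have hN : (0 : ℝ) < Fintype.card V := Nat.cast_pos.2 (by omega)
  have hqpos : 0 < q := by
    rcases q.eq_zero_or_pos with rfl | h
    · norm_num at hq
    · exact h
  have hq_one : (1 : ℝ) ≤ q := mod_cast hqpos
  have hmpos : (0 : ℝ) < m := Nat.cast_pos.2 (NeZero.pos m)
  have hdN : (G.maxDegree : ℝ) ≤ Fintype.card V := by
    have : Nonempty V := Fintype.card_pos_iff.1 (by omega)
    exact_mod_cast G.maxDegree_lt_card_verts.le
  set D : ℕ := ⌊(G.maxDegree + η * Fintype.card V) / (2 * m)⌋₊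
  set Δ : ℕ := ⌈4 * η * q * Fintype.card V⌉₊
  set s : ℕ := Fintype.card V / q + 1
  have hmD : 2 * m * D ≤ G.maxDegree + η * Fintype.card V :=
    (le_div_iff₀' (by positivity)).1 (Nat.floor_le (by positivity))
  have hD : D ≤ η * Fintype.card V := by
    refine le_of_mul_le_mul_left (a := (2 * m : ℝ)) ?_ (by positivity)
    calc 2 * m * D ≤ Fintype.card V + η * Fintype.card V := by linarith
      _ = (1 + η) * Fintype.card V := by ring
      _ ≤ 2 * m * η * Fintype.card V := by gcongr
      _ = 2 * m * (η * Fintype.card V) := by ring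
  have hqs : Fintype.card V ≤ q * s := (Nat.lt_mul_div_succ _ hqpos).le
  have hs : 2 * s + Fintype.card V < 2 * G.minDegree :=
    two_mul_div_add_one_add_lt_two_mul hqpos hq hqV hmin
  have hcard : Fintype.card V * ((2 * m + 1) * D) < Fintype.card V * G.minDegree + (s + 1) * Δ :=
    mod_cast mul_lt_mul_add_of_balanced hη hN s.cast_nonneg q.cast_nonneg hmD hD hmax
      (mod_cast hqs) (Nat.le_ceil _)
  obtain ⟨x, w, hw, hcover⟩ := exists_hamiltonian_cover_of_labelling hV hs hqs c
    (fun v j => Nat.le_floor (hc v j)) hcard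
  refine ⟨_, x, w, ?_, hw, hcover⟩
  push_cast
  exact mul_add_add_mul_le_of_balanced hη hN hq_one hηq hmD hD
    (Nat.ceil_lt_add_one (by positivity)).le hqV

end HamiltonCover

theorem regular_graph_hamilton_cover_general (ξ : ℝ) (hξ : 0 < ξ) :
    ∃ η > 0, ∃ n₀ : ℕ, ∀ (V : Type*) [Fintype V] [DecidableEq V] (G : SimpleGraph V)
      [DecidableRel G.Adj],
      n₀ ≤ Fintype.card V →
      (1 / 2 + ξ) * (Fintype.card V : ℝ) ≤ G.minDegree →
      (G.maxDegree : ℝ) ≤ G.minDegree + η * Fintype.card V →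
      ∃ (m : ℕ) (x : Fin m → V) (c : ∀ j : Fin m, G.Walk (x j) (x j)),
        (m : ℝ) ≤ (G.maxDegree + ξ * Fintype.card V) / 2 ∧
        (∀ j, (c j).IsHamiltonianCycle) ∧
        ∀ e ∈ G.edgeSet, ∃ j : Fin m, e ∈ (c j).edges := by
  obtain ⟨q, hq⟩ := exists_nat_gt (4 / ξ)
  have hqpos : (0 : ℝ) < q := lt_trans (by positivity) hq
  obtain ⟨η, hη, hηq⟩ : ∃ η : ℝ, 0 < η ∧ η * q ^ 2 = ξ / 20 :=
    ⟨ξ / 20 / q ^ 2, by positivity, by field_simp⟩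
  obtain ⟨m, hm⟩ := exists_nat_gt ((1 + η) / (2 * η))
  have hmpos : (0 : ℝ) < m := lt_trans (by positivity) hm
  have : NeZero m := ⟨by rintro rfl; simp at hmpos⟩
  obtain ⟨n₀, hn₀⟩ := HamiltonCover.exists_labelling_ncard_adj_le (κ := ZMod (2 * m)) hη
  refine ⟨η, hη, n₀ + 3 + ⌈5 * q / ξ⌉₊, fun V _ _ G _ hn hmin hmax => ?_⟩
  obtain ⟨c, hc⟩ := hn₀ V G (by omega)
  have hmη : 1 + η ≤ 2 * m * η := by
    rw [div_lt_iff₀ (by positivity)] at hm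
    linarith
  have hqV : 5 * q ≤ ξ * Fintype.card V := (div_le_iff₀' hξ).1 (Nat.ceil_le.1 (by omega))
  exact HamiltonCover.exists_hamiltonian_cover_of_balanced hη ((div_lt_iff₀' hξ).1 hq) hηq hmη
    (by omega) hqV hmin hmax c (by simpa using hc)

/-- For every ξ > 0 there exists n₀ such that every d-regular graph on n ≥ n₀ vertices with
d ≥ (1/2 + ξ)n contains a set of at most (d + ξn)/2 Hamilton cycles covering all its edges. -/
theorem regular_graph_hamilton_cover (ξ : ℝ) (hξ : 0 < ξ) :
    ∃ n₀ : ℕ, ∀ (V : Type) [Fintype V] [DecidableEq V] (G : SimpleGraph V)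
      [DecidableRel G.Adj] (d : ℕ),
      n₀ ≤ Fintype.card V →
      G.IsRegularOfDegree d →
      ((1 / 2 + ξ) * (Fintype.card V : ℝ) ≤ (d : ℝ)) →
      ∃ (m : ℕ) (x : Fin m → V) (c : ∀ j : Fin m, G.Walk (x j) (x j)),
        (m : ℝ) ≤ ((d : ℝ) + ξ * (Fintype.card V : ℝ)) / 2 ∧
        (∀ j, (c j).IsHamiltonianCycle) ∧
        ∀ e ∈ G.edgeSet, ∃ j : Fin m, e ∈ (c j).edges := by
  obtain ⟨η, hη, n₀, hn₀⟩ := regular_graph_hamilton_cover_general ξ hξ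
  refine ⟨n₀ + 1, fun V _ _ G _ d hn hd hdn => ?_⟩
  have : Nonempty V := Fintype.card_pos_iff.1 (by omega)
  have hmin : G.minDegree = d := hd.minDegree_eq
  have hmax : G.maxDegree = d := hd.maxDegree_eq
  rw [← hmin] at hdn
  rw [← hmax]
  exact hn₀ V G (by omega) hdn (by rw [hmin, hmax]; exact le_add_of_nonneg_right (by positivity))
end
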